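/- arXiv:2106.10180 — 6 statements merged into one kernel-verified Lean document; each statement's English description precedes it below -/
import Mathlib

section
/- Let C be a linear code of length n over F_{q^2}. There exists a truncation of C to a linear code of length r ≤ n over F_{q^2} which is linearly equivalent to a Hermitian self-orthogonal code if and only if the puncture code P(C) contains an element of Hamming weight r. -/
/-- The Hamming weight of a vector: the number of its nonzero coordinates. -/
noncomputable def wt {n : ℕ} {F : Type} [Zero F] (v : Fin n → F) : ℕ :=
  Set.ncard {i | v i ≠ 0}

theorem exists_norm_preimage (q : ℕ) (hq : IsPrimePow q)
    (F : Type) [Field F] [Fintype F] (hF : Fintype.card F = q ^ 2)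
    (a : F) (ha : a ^ q = a) (h0 : a ≠ 0) : ∃ t : F, t ≠ 0 ∧ t ^ (q + 1) = a := by
  classical
  obtain ⟨m, rfl⟩ : ∃ m, q = m + 2 := ⟨q - 2, by have := hq.one_lt; omega⟩
  obtain ⟨g, hg⟩ := IsCyclic.exists_generator (α := Fˣ)
  have hord : orderOf g = (m + 1) * (m + 3) := by
    rw [orderOf_eq_card_of_forall_mem_zpowers hg, Nat.card_eq_fintype_card,
      Fintype.card_units, hF]
    have : (m + 2) ^ 2 = (m + 1) * (m + 3) + 1 := by ring
    omega
  have h1 : (Units.mk0 a h0) ^ (m + 1) = 1 := by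
    ext
    simp only [Units.val_pow_eq_pow_val, Units.val_mk0, Units.val_one]
    apply mul_right_cancel₀ h0
    rw [← pow_succ, ha, one_mul]
  obtain ⟨k, hk⟩ := (mem_powers_iff_mem_zpowers.mpr (hg (Units.mk0 a h0)))
  simp only at hk
  rw [← hk, ← pow_mul, ← orderOf_dvd_iff_pow_eq_one, hord, mul_comm k] at h1
  obtain ⟨j, rfl⟩ := Nat.dvd_of_mul_dvd_mul_left (Nat.succ_pos m) h1
  refine ⟨((g ^ j : Fˣ) : F), Units.ne_zero _, ?_⟩
  have := congrArg (Units.val) hk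
  simp only [Units.val_pow_eq_pow_val, Units.val_mk0] at this ⊢
  rw [← this, ← pow_mul, mul_comm j]

/-- Let `C` be a linear code of length `n` over `F = 𝔽_{q²}`.  There is a
truncation of `C` to a linear code of length `r ≤ n` (i.e. a choice of `r` of the coordinates)
which is linearly equivalent to a Hermitian self-orthogonal code (i.e. after multiplying each
kept coordinate by a nonzero scalar `θ i`, the resulting code satisfies
`∑ u_i v_i^q = 0` for all codewords `u, v`) if and only if the puncture code
`P(C) = {λ ∈ 𝔽_q^n | ∑ λ_i u_i v_i^q = 0 for all u, v ∈ C}` contains an element of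
Hamming weight `r`. -/
theorem truncation_hermitian_selforthogonal_iff_puncture_weight
    (q n r : ℕ) (hq : IsPrimePow q) (hr : r ≤ n)
    (F : Type) [Field F] [Fintype F] (hF : Fintype.card F = q ^ 2)
    (C : Submodule F (Fin n → F)) :
    (∃ (S : Finset (Fin n)) (θ : Fin n → F),
        S.card = r ∧ (∀ i ∈ S, θ i ≠ 0) ∧
        ∀ u ∈ C, ∀ v ∈ C, ∑ i ∈ S, (θ i * u i) * (θ i * v i) ^ q = 0) ↔
      (∃ lam : Fin n → F,
        (∀ i, lam i ^ q = lam i) ∧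
        (∀ u ∈ C, ∀ v ∈ C, ∑ i, lam i * u i * (v i) ^ q = 0) ∧
        wt lam = r) := by
  classical
  constructor
  · rintro ⟨S, θ, hS, hθ, h⟩
    refine ⟨fun i => if i ∈ S then θ i ^ (q + 1) else 0, ?_, ?_, ?_⟩
    · intro i
      by_cases hi : i ∈ S
      · simp only [hi, if_true]
        have : θ i ^ (q ^ 2) = θ i := by rw [← hF]; exact FiniteField.pow_card _
        rw [← pow_mul, show (q + 1) * q = q ^ 2 + q by ring, pow_add, this, pow_succ, mul_comm]
      · simp [hi, hq.ne_zero]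
    · intro u hu v hv
      refine Eq.trans ?_ (h u hu v hv)
      rw [← Finset.sum_subset (Finset.subset_univ S)]
      · refine Finset.sum_congr rfl fun i hi => ?_
        simp only [hi, if_true]
        ring
      · intro i _ hi
        simp [hi]
    · rw [← hS, ← Set.ncard_coe_finset S]
      unfold wt
      congr 1
      ext i
      by_cases hi : i ∈ S
      · simp [hi, hθ i hi]
      · simp [hi]
  · rintro ⟨lam, hl, h, hw⟩
    have key : ∀ i, ∃ t : F, lam i ≠ 0 → t ≠ 0 ∧ t ^ (q + 1) = lam i := by
      intro i
      by_cases hi : lam i = 0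
      · exact ⟨0, fun h => absurd hi h⟩
      · obtain ⟨t, ht⟩ := exists_norm_preimage q hq F hF (lam i) (hl i) hi
        exact ⟨t, fun _ => ht⟩
    choose θ hθ using key
    refine ⟨Finset.univ.filter (fun i => lam i ≠ 0), θ, ?_, ?_, ?_⟩
    · rw [← hw, ← Set.ncard_coe_finset]
      unfold wt
      congr 1
      ext i
      simp
    · intro i hi
      exact (hθ i (by simpa using hi)).1
    · intro u hu v hv
      refine Eq.trans ?_ (h u hu v hv)
      rw [← Finset.sum_subset (Finset.subset_univ (Finset.univ.filter (fun i => lam i ≠ 0)))]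
      · refine Finset.sum_congr rfl fun i hi => ?_
        rw [← (hθ i (by simpa using hi)).2]
        ring
      · intro i _ hi
        have : lam i = 0 := by simpa using hi
        simp [this]
end

section
/- Let k ≤ q and let C be the k-dimensional Reed-Solomon code of length q^2+1 over F_{q^2}. Then P(C) = {(h(a_1), …, h(a_{q^2}), h_{q-k}) : h ∈ U}, where h_{q-k} denotes the coefficient of X^{(q-k)(q+1)} in h, and the dimension of P(C) as an F_q-subspace is q^2 + 1 - k^2. -/
open Polynomial

/-- The codeword of the (extended) `k`-dimensional Reed-Solomon code of length `q² + 1`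
associated to a polynomial `f`: the evaluations of `f` at all elements of the field
(enumerated by `a`), followed by the coefficient of `X^(k-1)` in `f`. -/
def rsWord (q k : ℕ) {F : Type} [Field F] (a : Fin (q ^ 2) → F)
    (f : Polynomial F) (i : Fin (q ^ 2 + 1)) : F :=
  if hi : (i : ℕ) < q ^ 2 then f.eval (a ⟨(i : ℕ), hi⟩) else f.coeff (k - 1)

/-- The puncture code `P(C)` of the `k`-dimensional Reed-Solomon code `C` of length `q² + 1`
over `F = 𝔽_{q²}`: all vectors `λ` with entries in the subfield `𝔽_q` (i.e. `λ_i^q = λ_i`)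
such that `∑ λ_i u_i v_i^q = 0` for all codewords `u, v` of `C`. -/
def puncRS (q k : ℕ) {F : Type} [Field F] [Fintype F] (a : Fin (q ^ 2) → F) :
    Set (Fin (q ^ 2 + 1) → F) :=
  {lam | (∀ i, lam i ^ q = lam i) ∧
    ∀ f g : Polynomial F, f.degree < (k : WithBot ℕ) → g.degree < (k : WithBot ℕ) →
      ∑ i, lam i * rsWord q k a f i * (rsWord q k a g i) ^ q = 0}

/-- Membership in the `𝔽_q`-subspace `U` of polynomials
`h(X) = ∑_{i=0}^{q-k-1} ∑_{j=i+1}^{q-1} (h_{ij} X^{iq+j} + h_{ij}^q X^{jq+i})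
        + ∑_{i=0}^{q-k} h_i X^{i(q+1)}`
with `h_{ij} ∈ 𝔽_{q²}` and `h_i ∈ 𝔽_q`. -/
def memU (q k : ℕ) {F : Type} [Field F] (h : Polynomial F) : Prop :=
  ∃ (h2 : ℕ → ℕ → F) (h1 : ℕ → F),
    (∀ i, h1 i ^ q = h1 i) ∧
    h = (∑ i ∈ Finset.range (q - k), ∑ j ∈ Finset.Ico (i + 1) q,
          (C (h2 i j) * X ^ (i * q + j) + C (h2 i j ^ q) * X ^ (j * q + i)))
      + ∑ i ∈ Finset.range (q - k + 1), C (h1 i) * X ^ (i * (q + 1))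

/-- Ring homomorphism `x ↦ x^q`. -/
theorem exists_frob (q : ℕ) (hq : IsPrimePow q) (F : Type) [Field F] [Fintype F]
    (hF : Fintype.card F = q ^ 2) : ∃ φ : F →+* F, ∀ x, φ x = x ^ q := by
  obtain ⟨p, n, hp, hn, rfl⟩ := hq
  have hp' : Nat.Prime p := hp.nat_prime
  have : Fact p.Prime := ⟨hp'⟩
  rw [← pow_mul] at hF
  have : CharP F p := charP_of_card_eq_prime_pow hF
  exact ⟨iterateFrobenius F p n, fun x => iterateFrobenius_def p n x⟩

theorem psum (q : ℕ) (F : Type) [Field F] [Fintype F] (hq : 2 ≤ q)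
    (hF : Fintype.card F = q ^ 2) (m : ℕ) :
    ∑ x : F, x ^ m = if 0 < m ∧ (q ^ 2 - 1) ∣ m then -1 else 0 := by
  classical
  rcases Nat.eq_zero_or_pos m with rfl | hm
  · simp [hF]
    have := FiniteField.cast_card_eq_zero F
    rw [hF] at this
    have : (q : F) ^ 2 = 0 := by exact_mod_cast this
    exact pow_eq_zero_iff (two_ne_zero) |>.mp this
  · have h := FiniteField.sum_pow_units F m
    rw [hF] at h
    simp only [hm, true_and]
    rw [← h, Fintype.sum_eq_add_sum_compl (0 : F), zero_pow hm.ne', zero_add]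
    symm
    refine Finset.sum_bij (fun x _ => (x : F)) ?_ ?_ ?_ ?_
    · intro x _; simp
    · intro x _ y _ h; exact Units.ext h
    · intro b hb
      refine ⟨Units.mk0 b (by simpa using hb), Finset.mem_univ _, rfl⟩
    · intro x _; simp

/-- The function with `q`-adic coefficient matrix `d`. -/
def Ev (q : ℕ) {F : Type} [Field F] (d : ℕ → ℕ → F) (x : F) : F :=
  ∑ i ∈ Finset.range q, ∑ j ∈ Finset.range q, d i j * x ^ (i * q + j)

theorem digits_inj {q i j a b : ℕ} (hj : j < q) (hb : b < q) (h : i * q + j = a * q + b) :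
    i = a ∧ j = b := by
  have hq : 0 < q := by omega
  have h1 := congrArg (· / q) h
  have h2 := congrArg (· % q) h
  simp [Nat.add_div_of_dvd_right, Nat.mul_add_mod', Nat.mod_eq_of_lt, Nat.div_eq_of_lt, hj, hb,
    hq] at h1 h2
  exact ⟨h1, h2⟩

theorem Ev_inj (q : ℕ) (F : Type) [Field F] [Fintype F] 
    (hF : Fintype.card F = q ^ 2) (d e : ℕ → ℕ → F) (h : ∀ x, Ev q d x = Ev q e x)
    (i j : ℕ) (hi : i < q) (hj : j < q) : d i j = e i j := by
  set P : F[X] := ∑ i ∈ Finset.range q, ∑ j ∈ Finset.range q,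
    C (d i j - e i j) * X ^ (i * q + j) with hP
  have hdeg : P.natDegree < Fintype.card F := by
    rw [hF]
    have : P.natDegree ≤ q ^ 2 - 1 := by
      refine Polynomial.natDegree_sum_le_of_forall_le _ _ fun i hi => ?_
      refine Polynomial.natDegree_sum_le_of_forall_le _ _ fun j hj => ?_
      refine (Polynomial.natDegree_C_mul_X_pow_le _ _).trans ?_
      simp only [Finset.mem_range] at hi hj
      have : (i + 1) * q ≤ q * q := Nat.mul_le_mul_right _ hi
      rw [sq]
      have : (i+1) * q = i * q + q := by ring
      omega
    have : 0 < q ^ 2 := pow_pos (by omega) 2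
    omega
  have h0 : P = 0 := by
    refine Polynomial.eq_zero_of_natDegree_lt_card_of_eval_eq_zero P Function.injective_id
      (fun x => ?_) hdeg
    have := h x
    simp only [Ev] at this
    simp [hP, Polynomial.eval_finsetSum, sub_mul, Finset.sum_sub_distrib, this]
  have hc : P.coeff (i * q + j) = d i j - e i j := by
    rw [hP, Polynomial.finsetSum_coeff, Finset.sum_eq_single i, Polynomial.finsetSum_coeff,
      Finset.sum_eq_single j]
    · rw [Polynomial.coeff_C_mul, Polynomial.coeff_X_pow, if_pos rfl, mul_one]
    · intro b hb hne
      rw [Polynomial.coeff_C_mul, Polynomial.coeff_X_pow, if_neg, mul_zero]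
      omega
    · simp [hj]
    · intro b hb hne
      rw [Polynomial.finsetSum_coeff]
      refine Finset.sum_eq_zero fun c hc => ?_
      rw [Polynomial.coeff_C_mul, Polynomial.coeff_X_pow, if_neg, mul_zero]
      intro h
      exact hne (digits_inj hj (Finset.mem_range.mp hc) h).1.symm
    · simp [hi]
  rw [h0, Polynomial.coeff_zero] at hc
  exact (sub_eq_zero.mp hc.symm)

theorem Ev_surj (q : ℕ) (F : Type) [Field F] [Fintype F] 
    (hF : Fintype.card F = q ^ 2) (w : F → F) : ∃ d : ℕ → ℕ → F, ∀ x, Ev q d x = w x := by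
  classical
  let ext : (Fin q → Fin q → F) → ℕ → ℕ → F := fun c i j =>
    if h : i < q ∧ j < q then c ⟨i, h.1⟩ ⟨j, h.2⟩ else 0
  let T : (Fin q → Fin q → F) → (F → F) := fun c => Ev q (ext c)
  have hinj : Function.Injective T := by
    intro c c' h
    funext i j
    have := Ev_inj q F hF (ext c) (ext c') (fun x => congrFun h x) i j i.2 j.2
    simpa [ext] using this
  have hb : Function.Bijective T := by
    rw [Fintype.bijective_iff_injective_and_card]
    refine ⟨hinj, ?_⟩
    simp [hF, ← pow_mul]
    ring_nf
  obtain ⟨c, hc⟩ := hb.2 w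
  exact ⟨ext c, fun x => congrFun hc x⟩

theorem Ev_herm (q : ℕ) (F : Type) [Field F] [Fintype F] 
    (hF : Fintype.card F = q ^ 2) (φ : F →+* F) (hφ : ∀ x, φ x = x ^ q) (d : ℕ → ℕ → F) :
    (∀ x, Ev q d x ^ q = Ev q d x) ↔ ∀ i j, i < q → j < q → d i j ^ q = d j i := by
  have key : ∀ x, Ev q d x ^ q = Ev q (fun i j => d j i ^ q) x := by
    intro x
    rw [← hφ, Ev, map_sum, Ev, Finset.sum_comm]
    rw [Finset.sum_comm]
    simp only [map_sum]
    rw [Finset.sum_comm]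
    refine Finset.sum_congr rfl fun i _ => Finset.sum_congr rfl fun j _ => ?_
    rw [map_mul, hφ, map_pow, hφ]
    congr 1
    have : x ^ q ^ 2 = x := by rw [← hF]; exact FiniteField.pow_card x
    calc (x ^ q) ^ (j * q + i) = (x ^ q ^ 2) ^ j * x ^ (i * q) := by
          rw [← pow_mul, ← pow_mul, ← pow_add]; ring_nf
      _ = _ := by rw [this, ← pow_add]; ring_nf
  constructor
  · intro h i j hi hj
    have := Ev_inj q F hF (fun i j => d j i ^ q) d (fun x => by rw [← key, h]) j i hj hi
    exact this
  · intro h x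
    rw [key]
    unfold Ev
    refine Finset.sum_congr rfl fun i hi => Finset.sum_congr rfl fun j hj => ?_
    simp only
    rw [h j i (Finset.mem_range.mp hj) (Finset.mem_range.mp hi)]

/-- number of fixed points of `x ↦ x^q` -/
theorem card_fix (q : ℕ) (F : Type) [Field F] [Fintype F] (hq : 2 ≤ q)
    (hF : Fintype.card F = q ^ 2) (φ : F →+* F) (hφ : ∀ x, φ x = x ^ q) :
    Nat.card {x : F // x ^ q = x} = q := by
  classical
  have bound : ∀ c : F, Nat.card {x : F // x ^ q = c * x} ≤ q := by
    intro c
    set P : F[X] := X ^ q - C c * X with hP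
    have hd : P.natDegree = q := by
      rw [hP, Polynomial.natDegree_sub_eq_left_of_natDegree_lt]
      · simp
      · refine lt_of_le_of_lt (Polynomial.natDegree_C_mul_le c X) ?_
        simp; omega
    have hne : P ≠ 0 := by
      intro h; rw [h] at hd; simp at hd; omega
    calc Nat.card {x : F // x ^ q = c * x} ≤ Nat.card {x : F // x ∈ P.roots.toFinset} := by
          refine Nat.card_le_card_of_injective
            (fun x => ⟨x.1, ?_⟩) ?_
          · rw [Multiset.mem_toFinset, Polynomial.mem_roots hne]; simp [hP, x.2]
          · intro x y h; simpa [Subtype.ext_iff] using h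
      _ = P.roots.toFinset.card := Nat.card_eq_card_toFinset _ |>.trans (by congr; ext; simp)
      _ ≤ P.roots.card := Multiset.toFinset_card_le _
      _ ≤ P.natDegree := Polynomial.card_roots' P
      _ = q := hd
  let f : F →+ F := φ.toAddMonoidHom - AddMonoidHom.id F
  have hf : ∀ x, f x = x ^ q - x := fun x => by simp [f, hφ]
  have h1 := f.ker.card_mul_index
  rw [AddSubgroup.index_ker, Nat.card_eq_fintype_card (α := F), hF] at h1
  have h2 : Nat.card f.ker = Nat.card {x : F // x ^ q = x} := by
    refine Nat.card_congr (Equiv.subtypeEquivRight fun x => ?_)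
    rw [AddMonoidHom.mem_ker, hf, sub_eq_zero]
  have h3 : Nat.card f.range ≤ q := by
    refine le_trans ?_ (bound (-1))
    refine Nat.card_le_card_of_injective (fun x => ⟨x.1, ?_⟩) ?_
    · obtain ⟨y, hy⟩ := x.2
      have : y ^ q ^ 2 = y := by rw [← hF]; exact FiniteField.pow_card y
      rw [← hy, hf, ← hφ, map_sub, hφ, hφ, ← pow_mul, ← sq, this]; ring
    · intro x y h; exact Subtype.ext (congrArg (fun z => z.1) h)
  have h4 := bound 1
  simp only [one_mul] at h4
  rw [h2] at h1
  refine le_antisymm h4 ?_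
  have : q * q ≤ Nat.card {x : F // x ^ q = x} * q := by
    rw [← sq, ← h1]; exact Nat.mul_le_mul_left _ h3
  exact Nat.le_of_mul_le_mul_right this (by omega)

theorem arith_dvd {q i j s t : ℕ} (hq : 2 ≤ q) (hi : i < q) (hj : j < q) (hs : s < q) (ht : t < q) :
    (0 < (i + t) * q + (j + s) ∧ (q ^ 2 - 1) ∣ (i + t) * q + (j + s)) ↔
      ((i + t = q - 1 ∧ j + s = q - 1) ∨
        (i = q - 1 ∧ j = q - 1 ∧ s = q - 1 ∧ t = q - 1)) := by
  obtain ⟨r, rfl⟩ : ∃ r, q = r + 1 := ⟨q - 1, by omega⟩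
  have hqq : (r + 1) ^ 2 - 1 = r * (r + 1) + r := by
    have : (r+1)^2 = r * (r + 1) + r + 1 := by ring
    omega
  rw [hqq]
  simp only [Nat.add_sub_cancel]
  constructor
  · rintro ⟨h0, c, hc⟩
    have hA : i + t ≤ 2 * r := by omega
    have hB : j + s ≤ 2 * r := by omega
    have hmul : (i + t) * (r + 1) ≤ 2 * r * (r + 1) := Nat.mul_le_mul_right _ hA
    have hr : 0 < r := by omega
    have hc3 : c < 3 := by
      by_contra h
      have : (r * (r + 1) + r) * 3 ≤ (r * (r + 1) + r) * c := Nat.mul_le_mul_left _ (by omega)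
      nlinarith
    interval_cases c
    · omega
    · left
      have h1 : i + t = r := by
        rcases lt_trichotomy (i + t) r with h | h | h
        · have : (i + t + 1) * (r + 1) ≤ r * (r + 1) := Nat.mul_le_mul_right _ h
          nlinarith
        · exact h
        · have : (r + 1) * (r + 1) ≤ (i + t) * (r + 1) := Nat.mul_le_mul_right _ h
          nlinarith
      rw [h1] at hc
      omega
    · right
      have h1 : i + t = 2 * r := by
        by_contra h
        have : (i + t + 1) * (r + 1) ≤ 2 * r * (r + 1) := Nat.mul_le_mul_right _ (by omega)
        nlinarith
      have h2 : j + s = 2 * r := by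
        rw [h1] at hc
        nlinarith
      omega
  · rintro (⟨h1, h2⟩ | ⟨rfl, rfl, rfl, rfl⟩)
    · rw [h1, h2]; exact ⟨by omega, dvd_rfl⟩
    · exact ⟨by omega, 2, by ring⟩

theorem T_val (q : ℕ) (F : Type) [Field F] [Fintype F] (hq : 2 ≤ q)
    (hF : Fintype.card F = q ^ 2) (d : ℕ → ℕ → F) (s t : ℕ) (hs : s < q) (ht : t < q) :
    ∑ x : F, Ev q d x * x ^ s * (x ^ t) ^ q =
      -d (q - 1 - t) (q - 1 - s) - (if s = q - 1 ∧ t = q - 1 then d (q - 1) (q - 1) else 0) := by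
  have h1 : ∑ x : F, Ev q d x * x ^ s * (x ^ t) ^ q =
      ∑ i ∈ Finset.range q, ∑ j ∈ Finset.range q,
        d i j * ∑ x : F, x ^ ((i + t) * q + (j + s)) := by
    simp only [Ev, Finset.sum_mul, Finset.mul_sum]
    rw [Finset.sum_comm]
    refine Finset.sum_congr rfl fun i _ => ?_
    rw [Finset.sum_comm]
    refine Finset.sum_congr rfl fun j _ => Finset.sum_congr rfl fun x _ => ?_
    rw [← pow_mul, mul_assoc, mul_assoc, ← pow_add, ← pow_add]
    ring_nf
  rw [h1]
  have h2 : ∀ i ∈ Finset.range q, ∀ j ∈ Finset.range q,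
      d i j * ∑ x : F, x ^ ((i + t) * q + (j + s)) =
        -(if i = q - 1 - t then (if j = q - 1 - s then d i j else 0) else 0)
        - (if i = q - 1 then (if j = q - 1 then
            (if s = q - 1 ∧ t = q - 1 then d i j else 0) else 0) else 0) := by
    intro i hi j hj
    rw [Finset.mem_range] at hi hj
    rw [psum q F hq hF, if_congr (arith_dvd hq hi hj hs ht) rfl rfl]
    by_cases hA : i + t = q - 1 ∧ j + s = q - 1
    · rw [if_pos (Or.inl hA), if_pos (by omega), if_pos (by omega)]
      have : ¬ (i = q - 1 ∧ j = q - 1 ∧ s = q - 1 ∧ t = q - 1) := by omega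
      split_ifs <;> first | (exfalso; omega) | simp
    · have hA' : ¬ (i = q - 1 - t ∧ j = q - 1 - s) := by omega
      by_cases hB : i = q - 1 ∧ j = q - 1 ∧ s = q - 1 ∧ t = q - 1
      · rw [if_pos (Or.inr hB), if_pos hB.1, if_pos hB.2.1, if_pos hB.2.2]
        split_ifs <;> first | (exfalso; omega) | simp
      · rw [if_neg (by tauto)]
        split_ifs <;> first | (exfalso; omega) | simp
  rw [Finset.sum_congr rfl fun i hi => Finset.sum_congr rfl fun j hj => h2 i hi j hj]
  simp only [Finset.sum_sub_distrib, Finset.sum_neg_distrib]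
  congr 1
  · rw [Finset.sum_eq_single (q - 1 - t), Finset.sum_eq_single (q - 1 - s)]
    · simp
    · intro b _ hb; simp [hb]
    · intro h; exact absurd (Finset.mem_range.mpr (by omega)) h
    · intro b _ hb; simp [hb]
    · intro h; exact absurd (Finset.mem_range.mpr (by omega)) h
  · rw [Finset.sum_eq_single (q - 1), Finset.sum_eq_single (q - 1)]
    · simp
    · intro b _ hb; simp [hb]
    · intro h; exact absurd (Finset.mem_range.mpr (by omega)) h
    · intro b _ hb; simp [hb]
    · intro h; exact absurd (Finset.mem_range.mpr (by omega)) h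

/-- The vanishing pattern of the coefficient matrix. -/
def Van (q k : ℕ) {F : Type} [Field F] (d : ℕ → ℕ → F) (lam : F) : Prop :=
  ∀ i j, i < q → j < q → q - k ≤ i → q - k ≤ j →
    d i j = if i = q - k ∧ j = q - k then lam else 0

theorem T_iff (q k : ℕ) (F : Type) [Field F] [Fintype F] (hq : 2 ≤ q) (hk : k ≤ q)
    (hF : Fintype.card F = q ^ 2) (d : ℕ → ℕ → F) (lam : F) :
    (∀ s t, s < k → t < k → ∑ x : F, Ev q d x * x ^ s * (x ^ t) ^ q +
      (if s = k - 1 ∧ t = k - 1 then lam else 0) = 0) ↔ Van q k d lam := by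
  constructor
  · intro h i j hi hj hi' hj'
    have h0 := h 0 0 (by omega) (by omega)
    rw [T_val q F hq hF d 0 0 (by omega) (by omega), if_neg (by omega)] at h0
    have h1 := h (q - 1 - j) (q - 1 - i) (by omega) (by omega)
    rw [T_val q F hq hF d _ _ (by omega) (by omega)] at h1
    have e1 : q - 1 - (q - 1 - i) = i := by omega
    have e2 : q - 1 - (q - 1 - j) = j := by omega
    rw [e1, e2] at h1
    simp only [Nat.sub_zero, sub_zero] at h0
    have e3 : (q - 1 - j = k - 1 ∧ q - 1 - i = k - 1) ↔ (i = q - k ∧ j = q - k) := by omega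
    rw [if_congr e3 rfl rfl] at h1
    by_cases hc : q - 1 - j = q - 1 ∧ q - 1 - i = q - 1
    · rw [if_pos hc] at h1
      rw [if_neg (by omega)] at h0
      linear_combination h0 - h1
    · rw [if_neg hc] at h1
      linear_combination -h1
  · intro h s t hs ht
    rw [T_val q F hq hF d s t (by omega) (by omega),
      h (q - 1 - t) (q - 1 - s) (by omega) (by omega) (by omega) (by omega)]
    have e3 : (q - 1 - t = q - k ∧ q - 1 - s = q - k) ↔ (s = k - 1 ∧ t = k - 1) := by omega
    rw [if_congr e3 rfl rfl]
    by_cases hc : s = q - 1 ∧ t = q - 1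
    · rw [h (q - 1) (q - 1) (by omega) (by omega) (by omega) (by omega), 
        if_neg (show ¬ (q - 1 = q - k ∧ q - 1 = q - k) by omega)]
      simp
    · rw [if_neg hc]; ring

theorem M_iff (q k : ℕ) (F : Type) [Field F] [Fintype F] (hq : 2 ≤ q) (hk : k ≤ q)
    (hF : Fintype.card F = q ^ 2) (φ : F →+* F) (hφ : ∀ x, φ x = x ^ q)
    (d : ℕ → ℕ → F) (lam : F) :
    (∀ f g : F[X], f.degree < (k : WithBot ℕ) → g.degree < (k : WithBot ℕ) →
      ∑ x : F, Ev q d x * f.eval x * (g.eval x) ^ q +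
        lam * f.coeff (k - 1) * g.coeff (k - 1) ^ q = 0) ↔ Van q k d lam := by
  rw [← T_iff q k F hq hk hF]
  constructor
  · intro h s t hs ht
    have := h (X ^ s) (X ^ t) (by rw [degree_X_pow]; exact_mod_cast hs)
      (by rw [degree_X_pow]; exact_mod_cast ht)
    simp only [eval_pow, eval_X, coeff_X_pow] at this
    refine Eq.trans ?_ this
    refine congrArg₂ (· + ·) rfl ?_
    have hq0 : q ≠ 0 := by omega
    simp only [eq_comm (a := k - 1)]
    by_cases h1 : s = k - 1 <;> by_cases h2 : t = k - 1 <;>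
      simp [h1, h2, hq0]
  · intro h f g hf hg
    rcases Nat.eq_zero_or_pos k with rfl | hk0
    · have hf0 : f = 0 := by
        by_contra h0
        rw [degree_eq_natDegree h0] at hf
        have : f.natDegree < 0 := by exact_mod_cast hf
        omega
      simp [hf0]
    have nd : ∀ f : F[X], f.degree < (k : WithBot ℕ) → f.natDegree < k := by
      intro f hf
      by_cases h0 : f = 0
      · simpa [h0] using hk0
      · exact (natDegree_lt_iff_degree_lt h0).mpr hf
    have e1 : ∀ x, f.eval x = ∑ s ∈ Finset.range k, f.coeff s * x ^ s :=
      fun x => eval_eq_sum_range' (nd f hf) x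
    have e2 : ∀ x, (g.eval x) ^ q = ∑ t ∈ Finset.range k, g.coeff t ^ q * (x ^ t) ^ q := by
      intro x
      rw [← hφ, eval_eq_sum_range' (nd g hg) x, map_sum]
      refine Finset.sum_congr rfl fun t _ => ?_
      rw [map_mul, hφ, hφ]
    have e3 : ∑ x : F, Ev q d x * f.eval x * (g.eval x) ^ q =
        ∑ s ∈ Finset.range k, ∑ t ∈ Finset.range k, f.coeff s * g.coeff t ^ q *
          ∑ x : F, Ev q d x * x ^ s * (x ^ t) ^ q := by
      simp only [e1, e2, Finset.mul_sum, Finset.sum_mul]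
      rw [Finset.sum_comm' (t' := Finset.range k) (s' := fun _ => Finset.univ) (by simp)]
      rw [Finset.sum_congr rfl fun t _ => Finset.sum_comm]
      rw [Finset.sum_comm]
      refine Finset.sum_congr rfl fun s _ => Finset.sum_congr rfl fun t _ =>
        Finset.sum_congr rfl fun x _ => ?_
      ring
    have e4 : lam * f.coeff (k - 1) * g.coeff (k - 1) ^ q =
        ∑ s ∈ Finset.range k, ∑ t ∈ Finset.range k, f.coeff s * g.coeff t ^ q *
          (if s = k - 1 ∧ t = k - 1 then lam else 0) := by
      rw [Finset.sum_eq_single (k - 1), Finset.sum_eq_single (k - 1)]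
      · simp; ring
      · intro b _ hb; simp [hb]
      · intro h; exact absurd (Finset.mem_range.mpr (by omega)) h
      · intro b _ hb; simp [hb]
      · intro h; exact absurd (Finset.mem_range.mpr (by omega)) h
    rw [e3, e4, ← Finset.sum_add_distrib]
    refine Finset.sum_eq_zero fun s hs => ?_
    rw [← Finset.sum_add_distrib]
    refine Finset.sum_eq_zero fun t ht => ?_
    rw [← mul_add, h s t (Finset.mem_range.mp hs) (Finset.mem_range.mp ht), mul_zero]

/-- Common description of both sides. -/
def Good (q k : ℕ) {F : Type} [Field F] (a : Fin (q ^ 2) → F) (v : Fin (q ^ 2 + 1) → F) : Prop :=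
  v (Fin.last _) ^ q = v (Fin.last _) ∧ ∃ d : ℕ → ℕ → F,
    (∀ i j, i < q → j < q → d i j ^ q = d j i) ∧ Van q k d (v (Fin.last _)) ∧
    ∀ i, v (Fin.castSucc i) = Ev q d (a i)

theorem punc_iff (q k : ℕ) (F : Type) [Field F] [Fintype F] (hq : 2 ≤ q) (hk : k ≤ q)
    (hF : Fintype.card F = q ^ 2) (φ : F →+* F) (hφ : ∀ x, φ x = x ^ q)
    (a : Fin (q ^ 2) → F) (ha : Function.Bijective a) (v : Fin (q ^ 2 + 1) → F) :
    v ∈ puncRS q k a ↔ Good q k a v := by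
  obtain ⟨d, hd⟩ : ∃ d : ℕ → ℕ → F, ∀ i, v (Fin.castSucc i) = Ev q d (a i) := by
    obtain ⟨d, hd⟩ := Ev_surj q F hF
      (fun x => v (Fin.castSucc ((Equiv.ofBijective a ha).symm x)))
    refine ⟨d, fun i => ?_⟩
    rw [hd]
    congr
    exact ((Equiv.ofBijective a ha).symm_apply_apply i).symm
  have hsum : ∀ (d : ℕ → ℕ → F), (∀ i, v (Fin.castSucc i) = Ev q d (a i)) → ∀ f g : F[X],
      ∑ i, v i * rsWord q k a f i * (rsWord q k a g i) ^ q =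
      ∑ x : F, Ev q d x * f.eval x * (g.eval x) ^ q +
        v (Fin.last _) * f.coeff (k - 1) * g.coeff (k - 1) ^ q := by
    intro d hd f g
    rw [Fin.sum_univ_castSucc, ← ha.sum_comp]
    congr 1
    · refine Finset.sum_congr rfl fun i _ => ?_
      rw [hd i]
      simp [rsWord]
    · simp [rsWord]
  unfold puncRS Good
  simp only [Set.mem_ofPred_eq]
  constructor
  · rintro ⟨h1, h2⟩
    refine ⟨h1 _, d, ?_, ?_, hd⟩
    · rw [← Ev_herm q F hF φ hφ]
      intro x
      obtain ⟨i, rfl⟩ := ha.2 x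
      rw [← hd, h1]
    · rw [← M_iff q k F hq hk hF φ hφ]
      intro f g hf hg
      rw [← hsum d hd]
      exact h2 f g hf hg
  · rintro ⟨h1, d, h2, h3, h4⟩
    rw [← Ev_herm q F hF φ hφ] at h2
    rw [← M_iff q k F hq hk hF φ hφ] at h3
    refine ⟨fun i => ?_, fun f g hf hg => ?_⟩
    · refine Fin.lastCases h1 (fun i => ?_) i
      rw [h4, h2]
    · rw [hsum d h4]
      exact h3 f g hf hg

/-- The polynomial of `U` with given parameters. -/
noncomputable def polyU (q k : ℕ) {F : Type} [Field F] (h2 : ℕ → ℕ → F) (h1 : ℕ → F) : F[X] :=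
  (∑ i ∈ Finset.range (q - k), ∑ j ∈ Finset.Ico (i + 1) q,
          (C (h2 i j) * X ^ (i * q + j) + C (h2 i j ^ q) * X ^ (j * q + i)))
      + ∑ i ∈ Finset.range (q - k + 1), C (h1 i) * X ^ (i * (q + 1))

/-- The coefficient matrix of the function defined by `polyU`. -/
def cmat (q k : ℕ) {F : Type} [Field F] (h2 : ℕ → ℕ → F) (h1 : ℕ → F) (i j : ℕ) : F :=
  (if i < j ∧ i < q - k then h2 i j else 0) + (if j < i ∧ j < q - k then h2 j i ^ q else 0)
    + (if i = j ∧ i < q - k then h1 i else 0)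
    + (if i = (if k = 0 then 1 else q - k) ∧ j = (if k = 0 then 1 else q - k)
        then h1 (q - k) else 0)

theorem polyU_coeff (q k : ℕ) {F : Type} [Field F] (hq : 2 ≤ q) (h2 : ℕ → ℕ → F)
    (h1 : ℕ → F) : (polyU q k h2 h1).coeff ((q - k) * (q + 1)) = h1 (q - k) := by
  unfold polyU
  rw [coeff_add, finsetSum_coeff, Finset.sum_eq_zero, zero_add, finsetSum_coeff,
    Finset.sum_eq_single (q - k)]
  · simp
  · intro b _ hb
    rw [coeff_C_mul, coeff_X_pow, if_neg, mul_zero]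
    intro h
    exact hb (Nat.eq_of_mul_eq_mul_right (by omega) h).symm
  · simp
  · intro i hi
    rw [finsetSum_coeff]
    refine Finset.sum_eq_zero fun j hj => ?_
    rw [Finset.mem_range] at hi
    rw [Finset.mem_Ico] at hj
    have hlt : i * q + j ≠ (q - k) * (q + 1) ∧ j * q + i ≠ (q - k) * (q + 1) := by
      constructor
      · have : (i + 1) * q ≤ (q - k) * q := Nat.mul_le_mul_right _ hi
        intro h
        nlinarith
      · intro h
        by_cases hk : k = 0
        · subst hk
          have : (j + 1) * q ≤ q * q := Nat.mul_le_mul_right _ hj.2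
          simp only [Nat.sub_zero] at h
          nlinarith
        · have := digits_inj (a := q - k) (b := q - k) (show i < q by omega)
            (show q - k < q by omega) (by rw [h]; ring)
          omega
    rw [coeff_add, coeff_C_mul, coeff_C_mul, coeff_X_pow, coeff_X_pow, if_neg hlt.1.symm,
      if_neg hlt.2.symm]
    simp

theorem polyU_eval (q k : ℕ) (F : Type) [Field F] [Fintype F] (hq : 2 ≤ q) 
    (hF : Fintype.card F = q ^ 2) (h2 : ℕ → ℕ → F)
    (h1 : ℕ → F) (x : F) : (polyU q k h2 h1).eval x = Ev q (cmat q k h2 h1) x := by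
  have sr : ∀ g : ℕ → F, ∑ i ∈ Finset.range (q - k), g i =
      ∑ i ∈ Finset.range q, if i < q - k then g i else 0 := by
    intro g
    rw [← Finset.sum_filter]
    congr 1
    ext i; simp; omega
  have si : ∀ (i : ℕ) (g : ℕ → F), ∑ j ∈ Finset.Ico (i + 1) q, g j =
      ∑ j ∈ Finset.range q, if i < j then g j else 0 := by
    intro i g
    rw [← Finset.sum_filter]
    congr 1
    ext i; simp; omega
  have A : ∑ i ∈ Finset.range (q - k), ∑ j ∈ Finset.Ico (i + 1) q, h2 i j * x ^ (i * q + j) =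
      Ev q (fun i j => if i < j ∧ i < q - k then h2 i j else 0) x := by
    unfold Ev
    rw [sr]
    refine Finset.sum_congr rfl fun i _ => ?_
    by_cases hi : i < q - k
    · rw [if_pos hi, si]
      refine Finset.sum_congr rfl fun j _ => ?_
      simp [hi]
    · simp [hi]
  have B : ∑ i ∈ Finset.range (q - k), ∑ j ∈ Finset.Ico (i + 1) q,
      h2 i j ^ q * x ^ (j * q + i) =
      Ev q (fun i j => if j < i ∧ j < q - k then h2 j i ^ q else 0) x := by
    unfold Ev
    rw [sr, Finset.sum_comm (s := Finset.range q)]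
    refine Finset.sum_congr rfl fun i _ => ?_
    by_cases hi : i < q - k
    · rw [if_pos hi, si]
      refine Finset.sum_congr rfl fun j _ => ?_
      simp [hi]
    · simp [hi]
  have D : ∑ i ∈ Finset.range (q - k), h1 i * x ^ (i * (q + 1)) =
      Ev q (fun i j => if i = j ∧ i < q - k then h1 i else 0) x := by
    unfold Ev
    rw [sr]
    refine Finset.sum_congr rfl fun i hi => ?_
    rw [Finset.sum_eq_single i]
    · simp; ring_nf
    · intro b _ hb; simp [hb.symm]
    · intro h; exact absurd hi h
  have E : h1 (q - k) * x ^ ((q - k) * (q + 1)) =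
      Ev q (fun i j => if i = (if k = 0 then 1 else q - k) ∧ j = (if k = 0 then 1 else q - k)
        then h1 (q - k) else 0) x := by
    unfold Ev
    set e := if k = 0 then 1 else q - k with he
    have heq : e < q := by
      rw [he]; split_ifs <;> omega
    rw [Finset.sum_eq_single e, Finset.sum_eq_single e]
    · simp only [and_self, if_true]
      congr 1
      by_cases hk : k = 0
      · have hx : x ^ q ^ 2 = x := by rw [← hF]; exact FiniteField.pow_card x
        rw [he, if_pos hk, hk, Nat.sub_zero]
        calc x ^ (q * (q + 1)) = x ^ q ^ 2 * x ^ q := by rw [← pow_add]; ring_nf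
          _ = _ := by rw [hx]; ring
      · rw [he, if_neg hk]; ring_nf
    · intro b _ hb; simp [hb]
    · intro h; exact absurd (Finset.mem_range.mpr heq) h
    · intro b _ hb; simp [hb]
    · intro h; exact absurd (Finset.mem_range.mpr heq) h
  have S : Ev q (cmat q k h2 h1) x =
      Ev q (fun i j => if i < j ∧ i < q - k then h2 i j else 0) x +
      Ev q (fun i j => if j < i ∧ j < q - k then h2 j i ^ q else 0) x +
      Ev q (fun i j => if i = j ∧ i < q - k then h1 i else 0) x +
      Ev q (fun i j => if i = (if k = 0 then 1 else q - k) ∧ j = (if k = 0 then 1 else q - k)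
        then h1 (q - k) else 0) x := by
    unfold Ev cmat
    simp only [← Finset.sum_add_distrib, ← add_mul]
  rw [S, ← A, ← B, ← D, ← E]
  unfold polyU
  rw [Finset.sum_range_succ]
  simp only [eval_add, eval_finsetSum, eval_mul, eval_C, eval_pow, eval_X,
    Finset.sum_add_distrib]
  ring

/-- The vector associated to parameters. -/
def vecU (q k : ℕ) {F : Type} [Field F] (a : Fin (q ^ 2) → F) (h : F[X]) :
    Fin (q ^ 2 + 1) → F :=
  fun i : Fin (q ^ 2 + 1) => if hi : (i : ℕ) < q ^ 2 then h.eval (a ⟨(i : ℕ), hi⟩)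
                     else h.coeff ((q - k) * (q + 1))

theorem vecU_last (q k : ℕ) {F : Type} [Field F] (a : Fin (q ^ 2) → F) (h : F[X]) :
    vecU q k a h (Fin.last _) = h.coeff ((q - k) * (q + 1)) := by
  simp [vecU]

theorem vecU_castSucc (q k : ℕ) {F : Type} [Field F] (a : Fin (q ^ 2) → F) (h : F[X])
    (i : Fin (q ^ 2)) : vecU q k a h (Fin.castSucc i) = h.eval (a i) := by
  simp [vecU]

theorem U_iff (q k : ℕ) (F : Type) [Field F] [Fintype F] (hq : 2 ≤ q) (hk : k ≤ q)
    (hF : Fintype.card F = q ^ 2) (φ : F →+* F) (hφ : ∀ x, φ x = x ^ q)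
    (a : Fin (q ^ 2) → F) (v : Fin (q ^ 2 + 1) → F) :
    (∃ h2 : ℕ → ℕ → F, ∃ h1 : ℕ → F, (∀ i, h1 i ^ q = h1 i) ∧ v = vecU q k a (polyU q k h2 h1)) ↔
      Good q k a v := by
  have hq0 : q ≠ 0 := by omega
  constructor
  · rintro ⟨h2, h1, hh, rfl⟩
    unfold Good
    rw [vecU_last, polyU_coeff q k hq]
    refine ⟨hh _, cmat q k h2 h1, ?_, ?_, ?_⟩
    · intro i j hi hj
      have hinv : (h2 j i ^ q) ^ q = h2 j i := by
        rw [← pow_mul, ← sq, ← hF]; exact FiniteField.pow_card _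
      unfold cmat
      rw [← hφ]
      simp only [map_add]
      have c1 : φ (if i < j ∧ i < q - k then h2 i j else 0) =
          if i < j ∧ i < q - k then h2 i j ^ q else 0 := by
        split_ifs <;> simp [hφ, hq0]
      have c2 : φ (if j < i ∧ j < q - k then h2 j i ^ q else 0) =
          if j < i ∧ j < q - k then h2 j i else 0 := by
        split_ifs
        · rw [hφ, hinv]
        · simp
      have c3 : φ (if i = j ∧ i < q - k then h1 i else 0) =
          if j = i ∧ j < q - k then h1 j else 0 := by
        by_cases h : i = j
        · subst h
          split_ifs
          · rw [hφ, hh]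
          · simp
        · simp [h, Ne.symm h]
      have c4 : ∀ e : ℕ, φ (if i = e ∧ j = e then h1 (q - k) else 0) =
          if j = e ∧ i = e then h1 (q - k) else 0 := by
        intro e
        rw [if_congr (and_comm (a := i = e)) rfl rfl]
        split_ifs
        · rw [hφ, hh]
        · simp
      rw [c1, c2, c3, c4]
      ring
    · intro i j hi hj hi' hj'
      unfold cmat
      rw [if_neg (by omega), if_neg (by omega), if_neg (by omega),
        if_neg (show k ≠ 0 by omega)]
      ring
    · intro i
      rw [vecU_castSucc, polyU_eval q k F hq hF]
  · rintro ⟨hl, d, hd, hV, hE⟩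
    set lam := v (Fin.last _) with hlam
    let h1 : ℕ → F := fun i => if i = q - k then lam else if i < q then
      (if k = 0 ∧ i = 1 then d 1 1 - lam else d i i) else 0
    refine ⟨d, h1, ?_, ?_⟩
    · intro i
      simp only [h1]
      rw [← hφ]
      split_ifs with c1 c2 c3
      · rw [hφ, hl]
      · rw [map_sub, hφ, hφ, hl, hd 1 1 (by omega) (by omega)]
      · rw [hφ, hd i i c2 c2]
      · simp
    · have hh1 : h1 (q - k) = lam := by simp [h1]
      funext i
      refine Fin.lastCases ?_ (fun i => ?_) i
      · rw [vecU_last, polyU_coeff q k hq, hh1]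
      · rw [vecU_castSucc, polyU_eval q k F hq hF, hE]
        unfold Ev
        refine Finset.sum_congr rfl fun i hi => Finset.sum_congr rfl fun j hj => ?_
        rw [Finset.mem_range] at hi hj
        congr 1
        unfold cmat
        rw [hh1]
        rcases lt_trichotomy i j with h | h | h
        · rw [if_neg (show ¬ (j < i ∧ j < q - k) by omega),
            if_neg (show ¬ (i = j ∧ i < q - k) by omega),
            if_neg (show ¬ (i = (if k = 0 then 1 else q - k) ∧ j = (if k = 0 then 1 else q - k))
              by intro h'; omega)]
          by_cases hi' : i < q - k
          · simp [h, hi']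
          · rw [hV i j hi hj (by omega) (by omega), if_neg (by omega), if_neg (by omega)]
            simp
        · subst h
          rw [if_neg (show ¬ (i < i ∧ i < q - k) by omega),
            if_neg (show ¬ (i < i ∧ i < q - k) by omega)]
          by_cases hi' : i < q - k
          · by_cases hk0 : k = 0
            · by_cases hi1 : i = 1
              · have : ¬ (1 = q) := by omega
                have h1q : 1 < q := by omega
                simp [hk0, hi1, h1, this, h1q]
              · have : ¬ (i = q) := by omega
                simp [hk0, hi1, h1, this, hi]
            · have : ¬ (i = q - k) := by omega
              simp [hk0, h1, this, hi, hi']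
          · rw [hV i i hi hj (by omega) (by omega), if_neg (show ¬ (i = i ∧ i < q - k) by omega),
              if_neg (show k ≠ 0 by omega)]
            ring
        · rw [if_neg (show ¬ (i < j ∧ i < q - k) by omega),
            if_neg (show ¬ (i = j ∧ i < q - k) by omega),
            if_neg (show ¬ (i = (if k = 0 then 1 else q - k) ∧ j = (if k = 0 then 1 else q - k))
              by intro h'; omega)]
          by_cases hj' : j < q - k
          · simp [h, hj', hd j i hj hi]
          · rw [hV i j hi hj (by omega) (by omega), if_neg (by omega), if_neg (by omega)]
            simp

theorem sum_count (q m : ℕ) (hm : m ≤ q) :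
    2 * ∑ i ∈ Finset.range m, (q - (i + 1)) + m + m ^ 2 = 2 * q * m := by
  induction m with
  | zero => simp
  | succ m ih =>
    have := ih (by omega)
    rw [Finset.sum_range_succ]
    obtain ⟨r, rfl⟩ : ∃ r, q = m + 1 + r := ⟨q - (m + 1), by omega⟩
    rw [show m + 1 + r - (m + 1) = r by omega]
    nlinarith

theorem polyU_congr (q k : ℕ) {F : Type} [Field F] {h2 h2' : ℕ → ℕ → F} {h1 h1' : ℕ → F}
    (e2 : ∀ i j, i < q - k → i < j → j < q → h2 i j = h2' i j)
    (e1 : ∀ i, i < q - k + 1 → h1 i = h1' i) : polyU q k h2 h1 = polyU q k h2' h1' := by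
  unfold polyU
  refine congrArg₂ (· + ·) ?_ ?_
  · refine Finset.sum_congr rfl fun i hi => Finset.sum_congr rfl fun j hj => ?_
    rw [Finset.mem_range] at hi
    rw [Finset.mem_Ico] at hj
    rw [e2 i j hi (by omega) hj.2]
  · refine Finset.sum_congr rfl fun i hi => ?_
    rw [e1 i (Finset.mem_range.mp hi)]

theorem punc_card (q k : ℕ) (F : Type) [Field F] [Fintype F] (hq : 2 ≤ q) (hk : k ≤ q)
    (hF : Fintype.card F = q ^ 2) (φ : F →+* F) (hφ : ∀ x, φ x = x ^ q)
    (a : Fin (q ^ 2) → F) (ha : Function.Bijective a) :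
    Set.ncard (puncRS q k a) = q ^ (q ^ 2 + 1 - k ^ 2) := by
  classical
  let I := (Finset.range (q - k)).sigma (fun i => Finset.Ico (i + 1) q)
  let Par := (I → F) × (Fin (q - k + 1) → {x : F // x ^ q = x})
  let p2 : Par → ℕ → ℕ → F := fun p i j => if h : (⟨i, j⟩ : Σ _ : ℕ, ℕ) ∈ I then p.1 ⟨_, h⟩ else 0
  let p1 : Par → ℕ → F := fun p i => if h : i < q - k + 1 then (p.2 ⟨i, h⟩).1 else 0
  have hp1 : ∀ p i, p1 p i ^ q = p1 p i := by
    intro p i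
    simp only [p1]
    split_ifs with h
    · exact (p.2 ⟨i, h⟩).2
    · exact zero_pow (by omega)
  have memI : ∀ i j, (⟨i, j⟩ : Σ _ : ℕ, ℕ) ∈ I ↔ i < q - k ∧ i < j ∧ j < q := by
    intro i j
    simp [I, Nat.succ_le_iff]
  let Φ : Par → Fin (q ^ 2 + 1) → F := fun p => vecU q k a (polyU q k (p2 p) (p1 p))
  have hrange : puncRS q k a = Set.range Φ := by
    ext v
    rw [punc_iff q k F hq hk hF φ hφ a ha, ← U_iff q k F hq hk hF φ hφ]
    constructor
    · rintro ⟨h2, h1, hh, rfl⟩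
      refine ⟨(fun x => h2 x.1.1 x.1.2, fun i => ⟨h1 i, hh i⟩), ?_⟩
      refine congrArg (vecU q k a) (polyU_congr q k ?_ ?_)
      · intro i j hi hij hj
        have : (⟨i, j⟩ : Σ _ : ℕ, ℕ) ∈ I := (memI i j).mpr ⟨hi, hij, hj⟩
        simp only [p2, dif_pos this]
      · intro i hi
        simp only [p1, dif_pos hi]
    · rintro ⟨p, rfl⟩
      exact ⟨p2 p, p1 p, hp1 p, rfl⟩
  have hinj : Function.Injective Φ := by
    intro p p' h
    have hl : p1 p (q - k) = p1 p' (q - k) := by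
      have := congrFun h (Fin.last _)
      simpa only [Φ, vecU_last, polyU_coeff q k hq] using this
    have hc : ∀ i j, i < q → j < q →
        cmat q k (p2 p) (p1 p) i j = cmat q k (p2 p') (p1 p') i j := by
      refine Ev_inj q F hF _ _ fun x => ?_
      obtain ⟨i, rfl⟩ := ha.2 x
      have := congrFun h (Fin.castSucc i)
      simpa only [Φ, vecU_castSucc, polyU_eval q k F hq hF] using this
    refine Prod.ext ?_ ?_
    · funext ⟨⟨i, j⟩, hx⟩
      have hm := (memI i j).mp hx
      have := hc i j (by omega) (by omega)
      unfold cmat at this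
      rw [hl] at this
      have h0 : ¬ (j < i) := by omega
      have h0' : ¬ (i = j) := by omega
      simpa [hm.1, hm.2.1, h0, h0', p2, hx] using this
    · funext ⟨i, hi⟩
      have key : p1 p i = p1 p' i := by
        by_cases hik : i = q - k
        · rw [hik, hl]
        · have hik' : i < q - k := by omega
          have := hc i i (by omega) (by omega)
          unfold cmat at this
          rw [hl] at this
          simpa [hik'] using this
      simp only [p1, dif_pos hi] at key
      exact Subtype.ext key
  rw [hrange, ← Set.image_univ, Set.ncard_image_of_injective _ hinj, Set.ncard_univ]
  have hI : I.card = ∑ i ∈ Finset.range (q - k), (q - (i + 1)) := by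
    simp [I, Finset.card_sigma]
  have hs := sum_count q (q - k) (by omega)
  rw [← hI] at hs
  simp only [Par]
  rw [Nat.card_prod, Nat.card_fun, Nat.card_fun, card_fix q F hq hF φ hφ,
    Nat.card_eq_fintype_card (α := F), hF]
  simp only [Nat.card_eq_fintype_card, Fintype.card_fin, Fintype.card_coe]
  rw [← pow_mul, ← pow_add]
  congr 1
  obtain ⟨m, rfl⟩ : ∃ m, q = k + m := ⟨q - k, by omega⟩
  rw [show k + m - k = m by omega] at *
  have : (k + m) ^ 2 + 1 = (2 * I.card + (m + 1)) + k ^ 2 := by nlinarith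
  omega

/-- Let `k ≤ q` and let `C` be the `k`-dimensional Reed-Solomon code of
length `q² + 1` over `𝔽_{q²}`.  Then
`P(C) = {(h(a_1), …, h(a_{q²}), h_{q-k}) : h ∈ U}`, where `h_{q-k}` is the coefficient of
`X^{(q-k)(q+1)}` in `h`, and the dimension of `P(C)` as an `𝔽_q`-subspace is `q² + 1 - k²`
(equivalently, `P(C)` has exactly `q^(q² + 1 - k²)` elements). -/
theorem puncture_code_of_RS_eq_evaluations_of_U
    (q k : ℕ) (hq : IsPrimePow q) (hk : k ≤ q)
    (F : Type) [Field F] [Fintype F] (hF : Fintype.card F = q ^ 2)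
    (a : Fin (q ^ 2) → F) (ha : Function.Bijective a) :
    puncRS q k a =
      {v : Fin (q ^ 2 + 1) → F | ∃ h : Polynomial F, memU q k h ∧
        v = fun i : Fin (q ^ 2 + 1) => if hi : (i : ℕ) < q ^ 2 then h.eval (a ⟨(i : ℕ), hi⟩)
                     else h.coeff ((q - k) * (q + 1))} ∧
    Set.ncard (puncRS q k a) = q ^ (q ^ 2 + 1 - k ^ 2) := by
  have hq2 : 2 ≤ q := hq.two_le
  obtain ⟨φ, hφ⟩ := exists_frob q hq F hF
  refine ⟨?_, punc_card q k F hq2 hk hF φ hφ a ha⟩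
  ext v
  rw [punc_iff q k F hq2 hk hF φ hφ a ha, ← U_iff q k F hq2 hk hF φ hφ]
  constructor
  · rintro ⟨h2, h1, hh, rfl⟩
    exact ⟨polyU q k h2 h1, ⟨h2, h1, hh, rfl⟩, rfl⟩
  · rintro ⟨h, ⟨h2, h1, hh, rfl⟩, rfl⟩
    exact ⟨h2, h1, hh, rfl⟩
end

section
/- Let k ≤ q and let C be the k-dimensional Reed-Solomon code of length q^2+1 over F_{q^2}. Then P(C) = {(g(a_1)+g(a_1)^q + c·a_1^{(q-k)(q+1)}, …, g(a_{q^2})+g(a_{q^2})^q + c·a_{q^2}^{(q-k)(q+1)}, c) : g ∈ F_{q^2}[X] with deg g ≤ (q-k)q - 1, c ∈ F_q}. -/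
open Polynomial

namespace PuncAux

variable {F : Type} [Field F] [Fintype F]

theorem exists_frob (q : ℕ) (hq : IsPrimePow q) (hF : Fintype.card F = q ^ 2) :
    ∃ φ : F →+* F, ∀ x, φ x = x ^ q := by
  obtain ⟨p, n, hp, hn, rfl⟩ := hq
  have hp' := hp.nat_prime
  obtain ⟨p', hc⟩ := CharP.exists F
  obtain ⟨m, hp2, hm⟩ := FiniteField.card F p'
  have hd : p' ∣ p := by
    have : p' ∣ (p ^ n) ^ 2 := by
      rw [← hF, hm]; exact dvd_pow_self _ m.ne_zero
    exact hp2.dvd_of_dvd_pow (hp2.dvd_of_dvd_pow this)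
  have : p' = p := (Nat.prime_dvd_prime_iff_eq hp2 hp').1 hd
  subst this
  have : ExpChar F p' := ExpChar.prime hp2
  exact ⟨iterateFrobenius F p' n, fun x => iterateFrobenius_def _ _ _⟩

theorem sum_eval (Q : ℕ) (hQ : 2 ≤ Q) (hF : Fintype.card F = Q) (P : F[X])
    (hP : P.natDegree ≤ Q - 1) : ∑ x : F, P.eval x = - P.coeff (Q - 1) := by
  obtain ⟨n, rfl⟩ : ∃ n, Q = n + 1 := ⟨Q - 1, by omega⟩
  have h1 : ∀ x : F, P.eval x = ∑ i ∈ Finset.range (n + 1), P.coeff i * x ^ i := fun x =>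
    eval_eq_sum_range' (by omega) x
  simp_rw [h1]
  rw [Finset.sum_comm]
  simp_rw [← Finset.mul_sum]
  rw [Finset.sum_range_succ, Finset.sum_eq_zero, zero_add]
  · have : ∑ x : F, x ^ n = -1 := by
      classical
      have := FiniteField.sum_pow_units F n
      rw [hF, Nat.add_sub_cancel, if_pos dvd_rfl] at this
      rw [← this]
      have h0 : ∑ x : F, x ^ n = ∑ x ∈ Finset.univ \ {(0 : F)}, x ^ n := by
        rw [← Finset.sum_sdiff (Finset.subset_univ {(0 : F)})]
        have hn : n ≠ 0 := by omega
        simp [hn]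
      rw [h0]
      symm
      refine Finset.sum_bij (fun (x : Fˣ) _ => (x : F)) ?_ ?_ ?_ ?_
      · intro x _; simp
      · intro x _ y _ h; exact Units.ext h
      · intro y hy
        have hy : y ≠ 0 := by simpa using hy
        exact ⟨Units.mk0 y hy, Finset.mem_univ _, rfl⟩
      · intro x _; simp
    rw [this]; simp
  · intro i hi
    rw [FiniteField.sum_pow_lt_card_sub_one, mul_zero]
    rw [hF]; simpa using hi

theorem degB (q k : ℕ) (hk : k + 1 ≤ q) :
    (q - (k + 1)) * (q + 1) + (k + q * k) = q ^ 2 - 1 := by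
  obtain ⟨d, rfl⟩ := Nat.exists_eq_add_of_le hk
  have : (k + 1 + d) ^ 2 = (d * (k + 1 + d + 1) + (k + (k + 1 + d) * k)) + 1 := by ring
  rw [this]; simp

theorem degG (q k n : ℕ) (hk : k + 1 ≤ q) (hn : n < (q - (k + 1)) * q) :
    n + (k + q * k) < q ^ 2 - 1 := by
  have := degB q k hk
  nlinarith

theorem natDegree_le {f : F[X]} {k : ℕ} (h : f.degree < ((k + 1 : ℕ) : WithBot ℕ)) :
    f.natDegree ≤ k := by
  rcases eq_or_ne f 0 with rfl | h0
  · simp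
  · have := (natDegree_lt_iff_degree_lt h0).2 h
    omega

theorem sumB (q k : ℕ) (hq : 2 ≤ q) (hk : k ≤ q) (hF : Fintype.card F = q ^ 2)
    (f g : F[X]) (hf : f.degree < (k : WithBot ℕ)) (hg : g.degree < (k : WithBot ℕ)) :
    ∑ x : F, x ^ ((q - k) * (q + 1)) * f.eval x * (g.eval x) ^ q =
      - (f.coeff (k - 1) * (g.coeff (k - 1)) ^ q) := by
  rcases k with _ | k
  · have : f = 0 := by simpa using hf
    subst this; simp
  have hf' := natDegree_le hf
  have hg' := natDegree_le hg
  have hgq : (g ^ q).natDegree ≤ q * k := natDegree_pow_le_of_le q hg'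
  have hfg : (f * g ^ q).natDegree ≤ k + q * k := natDegree_mul_le_of_le hf' hgq
  have hX : (X ^ ((q - (k + 1)) * (q + 1)) : F[X]).natDegree ≤ (q - (k + 1)) * (q + 1) :=
    natDegree_X_pow_le _
  have h := sum_eval (q ^ 2) (by nlinarith) hF
    (X ^ ((q - (k + 1)) * (q + 1)) * (f * g ^ q))
    (by rw [← degB q k hk]; exact natDegree_mul_le_of_le hX hfg)
  rw [← degB q k hk, coeff_mul_add_eq_of_natDegree_le hX hfg, coeff_mul_add_eq_of_natDegree_le hf' hgq,
    coeff_pow_of_natDegree_le hg'] at h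
  simpa [mul_assoc] using h

theorem sumG (q k : ℕ) (hq : 2 ≤ q) (hk : k ≤ q) (hF : Fintype.card F = q ^ 2)
    (G f g : F[X]) (hG : G.degree < (((q - k) * q : ℕ) : WithBot ℕ))
    (hf : f.degree < (k : WithBot ℕ)) (hg : g.degree < (k : WithBot ℕ)) :
    ∑ x : F, G.eval x * f.eval x * (g.eval x) ^ q = 0 := by
  rcases k with _ | k
  · have : f = 0 := by simpa using hf
    subst this; simp
  rcases eq_or_ne G 0 with rfl | hG0
  · simp
  have hG' := (natDegree_lt_iff_degree_lt hG0).2 hG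
  have hf' := natDegree_le hf
  have hg' := natDegree_le hg
  have hgq : (g ^ q).natDegree ≤ q * k := natDegree_pow_le_of_le q hg'
  have hfg : (f * g ^ q).natDegree ≤ k + q * k := natDegree_mul_le_of_le hf' hgq
  have hh : (G * (f * g ^ q)).natDegree < q ^ 2 - 1 :=
    (natDegree_mul_le_of_le le_rfl hfg).trans_lt (degG q k _ hk hG')
  have h := sum_eval (q ^ 2) (by nlinarith) hF (G * (f * g ^ q)) hh.le
  rw [coeff_eq_zero_of_natDegree_lt hh] at h
  simpa [mul_assoc] using h

theorem exists_theta (q : ℕ) (hq : 2 ≤ q) (hF : Fintype.card F = q ^ 2)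
    (φ : F →+* F) (hφ : ∀ x, φ x = x ^ q) (hφφ : ∀ x, φ (φ x) = x) :
    ∃ θ : F, θ + φ θ = 1 := by
  obtain ⟨x, hx⟩ : ∃ x : F, x + φ x ≠ 0 := by
    by_contra! hcon
    have hd : (X ^ q + X : F[X]).natDegree = q := by
      rw [natDegree_add_eq_left_of_natDegree_lt] <;> simp; omega
    have h0 : (X ^ q + X : F[X]) = 0 := by
      refine eq_zero_of_natDegree_lt_card_of_eval_eq_zero _ (f := (id : F → F))
        Function.injective_id ?_ ?_
      · intro i; simp [← hφ, add_comm, hcon]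
      · rw [hd, hF]; nlinarith
    rw [h0] at hd; simp at hd; omega
  refine ⟨x / (x + φ x), ?_⟩
  rw [map_div₀, map_add, hφφ, add_comm (φ x) x, ← add_div, div_self hx]

theorem kernel (Q : ℕ) (hF : Fintype.card F = Q) [DecidableEq F] (x y : F) :
    ∑ j ∈ Finset.range Q, y ^ j * x ^ (Q - 1 - j) = if x = y then 0 else 1 := by
  have hcard : (Q : F) = 0 := by rw [← hF]; exact FiniteField.cast_card_eq_zero F
  split_ifs with h
  · subst h
    rw [Finset.sum_congr rfl (g := fun _ => x ^ (Q - 1))]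
    · simp [hcard]
    · intro j hj
      rw [← pow_add]; congr 1; have := Finset.mem_range.1 hj; omega
  · have h1 := geom_sum₂_mul y x Q
    rw [← hF, FiniteField.pow_card, FiniteField.pow_card, hF] at h1
    exact mul_right_cancel₀ (sub_ne_zero.2 (Ne.symm h)) (by rw [h1, one_mul])

/-- Double-range form of a sum over `range (q ^ 2)`. -/
theorem sum_range_sq (q : ℕ) (h : ℕ → F) :
    ∑ j ∈ Finset.range (q ^ 2), h j =
      ∑ v ∈ Finset.range q, ∑ u ∈ Finset.range q, h (u + q * v) := by
  have : ∀ n, ∑ j ∈ Finset.range (q * n), h j =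
      ∑ v ∈ Finset.range n, ∑ u ∈ Finset.range q, h (u + q * v) := by
    intro n
    induction n with
    | zero => simp
    | succ n ih =>
      rw [mul_add, mul_one, Finset.sum_range_add, ih, Finset.sum_range_succ]
      simp [add_comm]
  rw [sq, this]

theorem expo (q u v : ℕ) (hu : u < q) (hv : v < q) :
    q ^ 2 - 1 - (u + q * v) = (q - 1 - u) + q * (q - 1 - v) := by
  obtain ⟨a, rfl⟩ := Nat.exists_eq_add_of_lt hu
  obtain ⟨b, hb⟩ := Nat.exists_eq_add_of_lt hv
  have h1 : u + a + 1 - 1 - u = a := by omega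
  have h2 : u + a + 1 - 1 - v = b := by omega
  rw [h1, h2]
  have : (u + a + 1) ^ 2 = (a + (u + a + 1) * b) + (u + (u + a + 1) * v) + 1 := by
    rw [sq]; nth_rewrite 2 [hb]; ring
  omega

theorem expand (q : ℕ) (hq : 2 ≤ q) (hF : Fintype.card F = q ^ 2) (l : F → F) (y : F) :
    l y = ∑ v ∈ Finset.range q, ∑ u ∈ Finset.range q,
      ((if u = 0 ∧ v = 0 then ∑ x, l x else 0)
        - ∑ x, l x * x ^ ((q - 1 - u) + q * (q - 1 - v))) * y ^ (u + q * v) := by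
  classical
  have hA : ∑ v ∈ Finset.range q, ∑ u ∈ Finset.range q,
      (if u = 0 ∧ v = 0 then ∑ x, l x else 0) * y ^ (u + q * v) = ∑ x, l x := by
    rw [Finset.sum_eq_single 0, Finset.sum_eq_single 0]
    · simp
    · intro b _ hb; simp [hb]
    · intro h; simp at h; omega
    · intro b _ hb; simp [hb]
    · intro h; simp at h; omega
  have hB : ∑ v ∈ Finset.range q, ∑ u ∈ Finset.range q,
      (∑ x, l x * x ^ ((q - 1 - u) + q * (q - 1 - v))) * y ^ (u + q * v)
      = ∑ x, l x * (if x = y then 0 else 1) := by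
    simp_rw [← kernel (q ^ 2) hF, sum_range_sq, Finset.mul_sum, Finset.sum_mul]
    rw [Finset.sum_comm (s := Finset.univ)]
    refine Finset.sum_congr rfl fun v hv => ?_
    rw [Finset.sum_comm (s := Finset.univ)]
    refine Finset.sum_congr rfl fun u hu => ?_
    refine Finset.sum_congr rfl fun x _ => ?_
    rw [expo q u v (Finset.mem_range.1 hu) (Finset.mem_range.1 hv)]
    ring
  simp_rw [sub_mul, Finset.sum_sub_distrib]
  rw [hA, hB, ← Finset.sum_sub_distrib]
  rw [Finset.sum_eq_single y]
  · simp
  · intro b _ hb; simp [hb]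
  · simp

/-- The key direction. -/
theorem exists_g (q k : ℕ) (hq : 2 ≤ q) (hk : k ≤ q) (hF : Fintype.card F = q ^ 2)
    (φ : F →+* F) (hφ : ∀ x, φ x = x ^ q) (hφφ : ∀ x, φ (φ x) = x)
    (l : F → F) (hl : ∀ x, φ (l x) = l x)
    (hM : ∀ s t, s < k → t < k → ∑ x, l x * x ^ (s + q * t) = 0) :
    ∃ g : F[X], g.degree < (((q - k) * q : ℕ) : WithBot ℕ) ∧
      ∀ y, l y = g.eval y + φ (g.eval y) := by
  obtain ⟨θ, hθ⟩ := exists_theta q hq hF φ hφ hφφ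
  obtain ⟨N, hN⟩ : ∃ N : ℕ → ℕ → F, N = fun u v => (if u = 0 ∧ v = 0 then ∑ x, l x else 0)
        - ∑ x, l x * x ^ ((q - 1 - u) + q * (q - 1 - v)) := ⟨_, rfl⟩
  have hexp : ∀ y, l y = ∑ v ∈ Finset.range q, ∑ u ∈ Finset.range q,
      N u v * y ^ (u + q * v) := by
    intro y; rw [hN]; exact expand q hq hF l y
  have hpow : ∀ (x : F) (s t : ℕ), φ (x ^ (s + q * t)) = x ^ (t + q * s) := by
    intro x s t
    have : φ (x ^ (q * t)) = x ^ t := by rw [pow_mul, ← hφ, map_pow, hφφ]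
    rw [pow_add, map_mul, this, hφ, ← pow_mul, mul_comm s q, pow_add, mul_comm]
  have hNs : ∀ u v, φ (N u v) = N v u := by
    intro u v
    rw [hN]
    simp only [map_sub, map_sum, map_mul, hpow, hl, and_comm (a := u = 0)]
    congr 1
    split_ifs <;> simp [hl]
  have hN0 : ∀ u v, u < q → v < q → q - k ≤ u → q - k ≤ v → N u v = 0 := by
    intro u v hu hv hu' hv'
    rw [hN]
    simp only
    rw [hM _ _ (by omega) (by omega), sub_zero]
    split_ifs with h
    · have := hM 0 0 (by omega) (by omega)
      simpa using this
    · rfl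
  obtain ⟨w, hw⟩ : ∃ w : ℕ → ℕ → F, w = fun u v =>
      if v < q - k then (if u < q - k then θ else 1) else 0 := ⟨_, rfl⟩
  have hww : ∀ u v, u < q → v < q → N u v = w u v * N u v + φ (w v u) * N u v := by
    intro u v hu hv
    by_cases h1 : u < q - k <;> by_cases h2 : v < q - k
    · simp only [hw, h1, h2, if_true]; rw [← add_mul, hθ, one_mul]
    · simp [hw, h1, h2]
    · simp [hw, h1, h2]
    · rw [hN0 u v hu hv (by omega) (by omega)]; simp
  refine ⟨∑ v ∈ Finset.range q, ∑ u ∈ Finset.range q, C (w u v * N u v) * X ^ (u + q * v),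
    ?_, ?_⟩
  · rw [← mem_degreeLT]
    refine Submodule.sum_mem _ fun v hv => Submodule.sum_mem _ fun u hu => ?_
    by_cases h2 : v < q - k
    · rw [mem_degreeLT]
      refine (degree_C_mul_X_pow_le _ _).trans_lt ?_
      have := Finset.mem_range.1 hu
      norm_cast
      nlinarith
    · simp [hw, h2]
  · intro y
    simp only [eval_finsetSum, eval_mul, eval_C, eval_pow, eval_X, map_sum, map_mul, hpow, hNs]
    rw [Finset.sum_comm (f := fun v u => φ (w u v) * N v u * y ^ (v + q * u)),
      ← Finset.sum_add_distrib, hexp y]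
    refine Finset.sum_congr rfl fun v hv => ?_
    rw [← Finset.sum_add_distrib]
    refine Finset.sum_congr rfl fun u hu => ?_
    rw [← add_mul, ← hww u v (Finset.mem_range.1 hu) (Finset.mem_range.1 hv)]

end PuncAux

/-- Let `k ≤ q` and let `C` be the `k`-dimensional Reed-Solomon code of
length `q² + 1` over `𝔽_{q²}`.  Then `P(C)` is exactly the set of vectors
`(g(a_1) + g(a_1)^q + c·a_1^{(q-k)(q+1)}, …, g(a_{q²}) + g(a_{q²})^q + c·a_{q²}^{(q-k)(q+1)}, c)`
where `g ∈ 𝔽_{q²}[X]` has degree at most `(q-k)q - 1` and `c ∈ 𝔽_q`. -/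
theorem puncture_code_of_RS_eq_trace_evaluations
    (q k : ℕ) (hq : IsPrimePow q) (hk : k ≤ q)
    (F : Type) [Field F] [Fintype F] (hF : Fintype.card F = q ^ 2)
    (a : Fin (q ^ 2) → F) (ha : Function.Bijective a) :
    puncRS q k a =
      {v : Fin (q ^ 2 + 1) → F | ∃ (g : Polynomial F) (c : F),
        g.degree < (((q - k) * q : ℕ) : WithBot ℕ) ∧ c ^ q = c ∧
        v = fun i : Fin (q ^ 2 + 1) =>
          if hi : (i : ℕ) < q ^ 2 then
            g.eval (a ⟨(i : ℕ), hi⟩) + (g.eval (a ⟨(i : ℕ), hi⟩)) ^ q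
              + c * (a ⟨(i : ℕ), hi⟩) ^ ((q - k) * (q + 1))
          else c} := by
  have hq2 : 2 ≤ q := hq.two_le
  obtain ⟨φ, hφ⟩ := PuncAux.exists_frob q hq hF
  have hφφ : ∀ x, φ (φ x) = x := by
    intro x; rw [hφ, hφ, ← pow_mul, ← sq, ← hF, FiniteField.pow_card]
  have hsum : ∀ (l : F → F) (c : F) (f g : F[X]),
      ∑ i : Fin (q ^ 2 + 1), (if hi : (i : ℕ) < q ^ 2 then l (a ⟨i, hi⟩) else c)
        * rsWord q k a f i * (rsWord q k a g i) ^ q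
      = ∑ x, l x * f.eval x * (g.eval x) ^ q
        + c * f.coeff (k - 1) * (g.coeff (k - 1)) ^ q := by
    intro l c f g
    rw [Fin.sum_univ_castSucc, ← ha.sum_comp (fun x => l x * f.eval x * (g.eval x) ^ q)]
    simp [rsWord]
  have hnorm : ∀ x : F, φ (x ^ ((q - k) * (q + 1))) = x ^ ((q - k) * (q + 1)) := by
    intro x
    rw [mul_comm, pow_mul, map_pow, pow_succ, map_mul, ← hφ, hφφ, mul_comm]
  ext v
  constructor
  · rintro ⟨hv, hs⟩
    obtain ⟨b, hb⟩ := ha.surjective.hasRightInverse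
    set c := v (Fin.last _) with hc
    set l : F → F := fun x => v (b x).castSucc with hl
    have hba : ∀ i, b (a i) = i := fun i => ha.injective (hb _)
    have hveq : v = fun i : Fin (q ^ 2 + 1) =>
        if hi : (i : ℕ) < q ^ 2 then l (a ⟨i, hi⟩) else c := by
      funext i
      refine Fin.lastCases ?_ (fun i => ?_) i
      · simp [hc]
      · simp [hl, hba]
    have hs' : ∀ f g : F[X], f.degree < (k : WithBot ℕ) → g.degree < (k : WithBot ℕ) →
        ∑ x, l x * f.eval x * (g.eval x) ^ q
        + c * f.coeff (k - 1) * (g.coeff (k - 1)) ^ q = 0 := by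
      intro f g hf hg
      rw [← hsum, ← hs f g hf hg]
      refine Finset.sum_congr rfl fun i _ => ?_
      rw [← congrFun hveq i]
    have hcq : c ^ q = c := hv _
    obtain ⟨g, hg, hgl⟩ := PuncAux.exists_g q k hq2 hk hF φ hφ hφφ
      (fun x => l x - c * x ^ ((q - k) * (q + 1)))
      (by
        intro x
        rw [map_sub, map_mul, hnorm, hφ c, hcq, hφ, hv])
      (by
        intro s t hs1 ht1
        have hd : ∀ s, s < k → (X ^ s : F[X]).degree < (k : WithBot ℕ) := by
          intro s h
          rw [degree_X_pow]; exact_mod_cast h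
        have h1 := hs' (X ^ s) (X ^ t) (hd s hs1) (hd t ht1)
        have h2 := PuncAux.sumB q k hq2 hk hF (X ^ s) (X ^ t) (hd s hs1) (hd t ht1)
        have h3 : ∀ x : F, (l x - c * x ^ ((q - k) * (q + 1))) * x ^ (s + q * t)
            = l x * (X ^ s : F[X]).eval x * ((X ^ t : F[X]).eval x) ^ q
            - c * (x ^ ((q - k) * (q + 1)) * (X ^ s : F[X]).eval x
              * ((X ^ t : F[X]).eval x) ^ q) := by
          intro x
          simp only [eval_pow, eval_X]
          rw [pow_add, ← pow_mul x t q, mul_comm t q]; ring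
        simp_rw [h3]
        rw [Finset.sum_sub_distrib, ← Finset.mul_sum, h2]
        rw [← h1]; ring)
    refine ⟨g, c, hg, hcq, ?_⟩
    rw [hveq]
    funext i
    split_ifs with hi
    · rw [← hφ, ← hgl]; ring
    · rfl
  · rintro ⟨g, c, hg, hc, rfl⟩
    refine ⟨?_, ?_⟩
    · intro i
      simp only
      split_ifs with hi
      · rw [← hφ, ← hφ, map_add, map_add, hφφ, map_mul, hnorm, hφ c, hc]; ring
      · exact hc
    · intro f1 f2 h1 h2
      refine (hsum (fun x => g.eval x + (g.eval x) ^ q + c * x ^ ((q - k) * (q + 1))) c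
        f1 f2).trans ?_
      have e1 := PuncAux.sumG q k hq2 hk hF g f1 f2 hg h1 h2
      have e2 := PuncAux.sumG q k hq2 hk hF g f2 f1 hg h2 h1
      have e3 := PuncAux.sumB q k hq2 hk hF f1 f2 h1 h2
      have e2' := congrArg φ e2
      rw [map_sum, map_zero] at e2'
      have h3 : ∀ x : F, (g.eval x + (g.eval x) ^ q + c * x ^ ((q - k) * (q + 1)))
          * f1.eval x * (f2.eval x) ^ q
          = g.eval x * f1.eval x * (f2.eval x) ^ q
          + φ (g.eval x * f2.eval x * (f1.eval x) ^ q)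
          + c * (x ^ ((q - k) * (q + 1)) * f1.eval x * (f2.eval x) ^ q) := by
        intro x
        simp only [map_mul, ← hφ, hφφ]; ring
      simp_rw [h3]
      rw [Finset.sum_add_distrib, Finset.sum_add_distrib, e1, e2', ← Finset.mul_sum, e3]
      ring
end

section
/- If 1 ≤ k ≤ q/2 then the minimum Hamming distance of the puncture code P(C) of the [q^2+1, k, q^2+2-k]_{q^2} Reed-Solomon code C is 2k. -/
open Polynomial

theorem rsWord_castSucc (q k : ℕ) {F : Type} [Field F] (a : Fin (q ^ 2) → F)
    (f : Polynomial F) (i : Fin (q ^ 2)) : rsWord q k a f i.castSucc = f.eval (a i) := by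
  simp [rsWord]

theorem rsWord_last (q k : ℕ) {F : Type} [Field F] (a : Fin (q ^ 2) → F)
    (f : Polynomial F) : rsWord q k a f (Fin.last _) = f.coeff (k - 1) := by
  simp [rsWord]

/-- A polynomial whose word vanishes on a prescribed set of at most `k - 1` positions. -/
theorem exists_vanishing (q k : ℕ) (hk1 : 1 ≤ k) {F : Type} [Field F] (a : Fin (q ^ 2) → F)
    (ha : Function.Injective a) (A : Finset (Fin (q ^ 2 + 1))) (hA : A.card ≤ k - 1) :
    ∃ f : Polynomial F, f.degree < (k : WithBot ℕ) ∧ (∀ j ∈ A, rsWord q k a f j = 0) ∧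
      ∀ p : Fin (q ^ 2), p.castSucc ∉ A → rsWord q k a f p.castSucc ≠ 0 := by
  classical
  let B : Finset (Fin (q ^ 2)) := Finset.univ.filter (fun i => i.castSucc ∈ A)
  have hBA : B.map Fin.castSuccEmb ⊆ A := by
    intro j hj
    simp only [Finset.mem_map, B, Finset.mem_filter] at hj
    obtain ⟨i, hi, rfl⟩ := hj
    exact hi.2
  have hB : B.card ≤ A.card := by
    have := Finset.card_le_card hBA
    rwa [Finset.card_map] at this
  refine ⟨Lagrange.nodal B a, ?_, ?_, ?_⟩
  · rw [Lagrange.degree_nodal]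
    exact_mod_cast (by omega : B.card < k)
  · intro j hj
    induction j using Fin.lastCases with
    | last =>
      rw [rsWord_last]
      apply Polynomial.coeff_eq_zero_of_natDegree_lt
      rw [Lagrange.natDegree_nodal]
      have h2 : B.map Fin.castSuccEmb ⊂ A := by
        refine Finset.ssubset_iff_subset_ne.2 ⟨hBA, ?_⟩
        intro h
        rw [← h] at hj
        simp only [Finset.mem_map] at hj
        obtain ⟨i, _, hi⟩ := hj
        exact (Fin.castSucc_lt_last i).ne hi
      have := Finset.card_lt_card h2
      rw [Finset.card_map] at this
      omega
    | cast i =>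
      rw [rsWord_castSucc]
      exact Lagrange.eval_nodal_at_node (by simp [B, hj])
  · intro p hp
    rw [rsWord_castSucc]
    apply Lagrange.eval_nodal_not_at_node
    intro i hi h
    have : p = i := ha h
    subst this
    simp [B] at hi
    exact hp hi

theorem puncRS_lower (q k : ℕ) (hk1 : 1 ≤ k) (hq0 : q ≠ 0)
    (F : Type) [Field F] [Fintype F] (a : Fin (q ^ 2) → F) (ha : Function.Bijective a)
    (lam : Fin (q ^ 2 + 1) → F) (hlam : lam ∈ puncRS q k a) (h0 : lam ≠ 0) :
    2 * k ≤ wt lam := by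
  classical
  obtain ⟨-, hs⟩ := hlam
  by_contra hlt
  have hw : wt lam = (Finset.univ.filter (fun i => lam i ≠ 0)).card := by
    rw [wt, ← Set.ncard_coe_finset]
    simp
  rw [hw] at hlt
  set S := Finset.univ.filter (fun i => lam i ≠ 0) with hS
  by_cases hp : ∃ p : Fin (q ^ 2), lam p.castSucc ≠ 0
  · obtain ⟨p, hp⟩ := hp
    have hpS : p.castSucc ∈ S := by simp [hS, hp]
    have hc := Finset.card_erase_of_mem hpS
    obtain ⟨A, hAS, hA⟩ := Finset.exists_subset_card_eq
      (min_le_left (S.erase p.castSucc).card (k - 1))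
    have hB : ((S.erase p.castSucc) \ A).card ≤ k - 1 := by
      rw [Finset.card_sdiff_of_subset hAS]
      omega
    obtain ⟨f, hf, hf0, hfp⟩ := exists_vanishing q k hk1 a ha.1 A (by omega)
    obtain ⟨g, hg, hg0, hgp⟩ := exists_vanishing q k hk1 a ha.1 _ hB
    have h := hs f g hf hg
    rw [Finset.sum_eq_single p.castSucc] at h
    · have h1 : p.castSucc ∉ A := fun h => by simpa using hAS h
      have h2 : p.castSucc ∉ (S.erase p.castSucc) \ A := by simp
      exact mul_ne_zero (mul_ne_zero hp (hfp p h1)) (pow_ne_zero _ (hgp p h2)) h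
    · intro j _ hj
      by_cases hj0 : lam j = 0
      · simp [hj0]
      by_cases hjA : j ∈ A
      · simp [hf0 j hjA]
      · have : j ∈ (S.erase p.castSucc) \ A := by simp [hS, hj, hj0, hjA]
        simp [hg0 j this, hq0]
    · simp
  · push Not at hp
    have h := hs (X ^ (k - 1)) (X ^ (k - 1)) (by rw [degree_X_pow]; exact_mod_cast (by omega))
      (by rw [degree_X_pow]; exact_mod_cast (by omega))
    rw [Fin.sum_univ_castSucc] at h
    simp [hp, rsWord_last] at h
    apply h0
    funext j
    induction j using Fin.lastCases with
    | last => simpa using h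
    | cast i => simpa using hp i

theorem exists_fixed (q : ℕ) (hq : 2 ≤ q) (F : Type) [Field F] [Fintype F]
    (hF : Fintype.card F = q ^ 2) :
    ∃ T : Finset F, T.card = q ∧ ∀ x ∈ T, x ^ q = x := by
  classical
  obtain ⟨g, hg⟩ := IsCyclic.exists_generator (α := Fˣ)
  have hg' : orderOf g = q ^ 2 - 1 := by
    rw [orderOf_eq_card_of_forall_mem_zpowers hg, Nat.card_eq_fintype_card,
      Fintype.card_units, hF]
  have hfac : q ^ 2 - 1 = (q + 1) * (q - 1) := by
    have := Nat.sq_sub_sq q 1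
    simpa using this
  have hprim : IsPrimitiveRoot g (q ^ 2 - 1) := hg' ▸ IsPrimitiveRoot.orderOf g
  have hh : IsPrimitiveRoot (g ^ (q + 1)) (q - 1) :=
    hprim.pow (by rw [hfac]; exact Nat.mul_pos (by omega) (by omega)) hfac
  have hh' : IsPrimitiveRoot ((g ^ (q + 1) : Fˣ) : F) (q - 1) :=
    IsPrimitiveRoot.coe_units_iff.2 hh
  have hmem : ∀ x : F, x ∈ nthRootsFinset (q - 1) (1 : F) → x ^ (q - 1) = 1 := fun x hx =>
    (mem_nthRootsFinset (by omega) _).1 hx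
  refine ⟨insert 0 (nthRootsFinset (q - 1) (1 : F)), ?_, ?_⟩
  · rw [Finset.card_insert_of_notMem, hh'.card_nthRootsFinset]
    · omega
    · intro h
      have := hmem _ h
      rw [zero_pow (by omega)] at this
      exact zero_ne_one this
  · intro x hx
    rcases Finset.mem_insert.1 hx with rfl | hx
    · exact zero_pow (by omega)
    · have := hmem _ hx
      obtain ⟨m, rfl⟩ : ∃ m, q = m + 1 := ⟨q - 1, by omega⟩
      simp at this
      rw [pow_succ, this, one_mul]

theorem puncRS_exists (q k : ℕ) (hq : IsPrimePow q) (hk1 : 1 ≤ k) (hk2 : 2 * k ≤ q)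
    (F : Type) [Field F] [Fintype F] (hF : Fintype.card F = q ^ 2)
    (a : Fin (q ^ 2) → F) (ha : Function.Bijective a) :
    ∃ lam ∈ puncRS q k a, lam ≠ 0 ∧ wt lam = 2 * k := by
  classical
  obtain ⟨T₀, hT₀, hT₀q⟩ := exists_fixed q hq.two_le F hF
  obtain ⟨φ, hφ⟩ := exists_frob q hq F hF
  obtain ⟨T, hTT, hT⟩ := Finset.exists_subset_card_eq (hk2.trans_eq hT₀.symm)
  have hTq : ∀ x ∈ T, φ x = x := fun x hx => by rw [hφ, hT₀q x (hTT hx)]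
  let w : F → F := fun x => if x ∈ T then (∏ y ∈ T.erase x, (x - y))⁻¹ else 0
  have hw0 : ∀ x, w x ≠ 0 ↔ x ∈ T := by
    intro x
    by_cases hx : x ∈ T
    · simp only [w, hx, if_true, iff_true]
      apply inv_ne_zero
      rw [Finset.prod_ne_zero_iff]
      intro y hy
      exact sub_ne_zero.2 (Finset.ne_of_mem_erase hy).symm
    · simp [w, hx]
  have hwq : ∀ x, φ (w x) = w x := by
    intro x
    by_cases hx : x ∈ T
    · simp only [w, hx, if_true, map_inv₀, map_prod, map_sub]
      congr 1
      refine Finset.prod_congr rfl fun y hy => ?_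
      rw [hTq x hx, hTq y (Finset.mem_of_mem_erase hy)]
    · simp [w, hx]
  let lam : Fin (q ^ 2 + 1) → F := Fin.snoc (α := fun _ => F) (fun i => w (a i)) 0
  have hl1 : ∀ i : Fin (q ^ 2), lam i.castSucc = w (a i) := fun i => by simp [lam]
  have hl2 : lam (Fin.last _) = 0 := by simp [lam]
  have hwt : wt lam = 2 * k := by
    let e := Equiv.ofBijective a ha
    have : {i | lam i ≠ 0} =
        ((T.map e.symm.toEmbedding).map Fin.castSuccEmb : Finset (Fin (q ^ 2 + 1))) := by
      ext j
      induction j using Fin.lastCases with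
      | last =>
        simp [hl2, Fin.castSucc_ne_last]
      | cast i =>
        have : e i = a i := rfl
        simp [hl1, hw0, ← this]
    rw [wt, this, Set.ncard_coe_finset, Finset.card_map, Finset.card_map, hT]
  refine ⟨lam, ⟨?_, ?_⟩, ?_, hwt⟩
  · intro i
    rw [← hφ]
    induction i using Fin.lastCases with
    | last => simp [hl2]
    | cast i => rw [hl1, hwq]
  · intro f g hf hg
    rw [Fin.sum_univ_castSucc]
    simp only [hl1, hl2, rsWord_castSucc, zero_mul, add_zero]
    rw [ha.sum_comp (fun x => w x * f.eval x * (g.eval x) ^ q)]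
    have hdeg : (f * g.map φ).natDegree < 2 * k - 1 := by
      have h0 : ∀ r : Polynomial F, r.degree < (k : WithBot ℕ) → r.natDegree ≤ k - 1 := by
        intro r hr
        by_cases hr0 : r = 0
        · simp [hr0]
        · have := (natDegree_lt_iff_degree_lt hr0).2 hr
          omega
      have h1 := h0 f hf
      have h2 := h0 g hg
      have h3 : (g.map φ).natDegree ≤ g.natDegree := natDegree_map_le
      have h4 := natDegree_mul_le (p := f) (q := g.map φ)
      omega
    have hco := Lagrange.coeff_eq_sum (s := T) (v := id) (P := f * g.map φ)
      (Set.injOn_id _) (lt_of_le_of_lt degree_le_natDegree (by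
        rw [hT]; exact_mod_cast (by omega)))
    rw [coeff_eq_zero_of_natDegree_lt (by omega)] at hco
    rw [← Finset.sum_subset (Finset.subset_univ T)
      (fun x _ hx => by simp [w, hx]), hco]
    refine Finset.sum_congr rfl fun x hx => ?_
    have : (g.map φ).eval x = (g.eval x) ^ q := by
      rw [← hφ]
      conv_lhs => rw [← hTq x hx]
      rw [eval_map_apply]
    simp only [id, eval_mul, this, w, hx, if_true]
    rw [div_eq_mul_inv]
    ring
  · intro h
    rw [h] at hwt
    simp [wt] at hwt
    omega

/-- If `1 ≤ k ≤ q/2` then the minimum Hamming distance of the puncture code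
`P(C)` of the `[q²+1, k, q²+2-k]_{q²}` Reed-Solomon code `C` is `2k`: there is a nonzero
element of `P(C)` of weight `2k`, and every nonzero element of `P(C)` has weight at least
`2k`. -/
theorem min_distance_puncture_RS_small_k
    (q k : ℕ) (hq : IsPrimePow q) (hk1 : 1 ≤ k) (hk2 : 2 * k ≤ q)
    (F : Type) [Field F] [Fintype F] (hF : Fintype.card F = q ^ 2)
    (a : Fin (q ^ 2) → F) (ha : Function.Bijective a) :
    (∃ lam ∈ puncRS q k a, lam ≠ 0 ∧ wt lam = 2 * k) ∧
    (∀ lam ∈ puncRS q k a, lam ≠ 0 → 2 * k ≤ wt lam) := by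
  exact ⟨puncRS_exists q k hq hk1 hk2 F hF a ha,
    fun lam hl h0 => puncRS_lower q k hk1 (by omega) F a ha lam hl h0⟩
end

section
/- If q is even and q/2 ≤ k ≤ q-1, then the minimum Hamming distance of the puncture code P(C) of the [q^2+1, k, q^2+2-k]_{q^2} Reed-Solomon code C is at most q(k + 1 - q/2); that is, P(C) contains a nonzero codeword of weight q(k + 1 - q/2). -/
open Polynomial

theorem sum_eval_zero {F : Type} [Field F] [Fintype F] (p : Polynomial F)
    (hp : p.natDegree < Fintype.card F - 1) : ∑ x : F, p.eval x = 0 := by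
  simp_rw [Polynomial.eval_eq_sum_range]
  rw [Finset.sum_comm]
  refine Finset.sum_eq_zero fun i hi => ?_
  rw [← Finset.mul_sum, FiniteField.sum_pow_lt_card_sub_one, mul_zero]
  have := Finset.mem_range.1 hi
  omega

/-- The partial trace `∑ x^(2^l)`. -/
def ptr (h : ℕ) {F : Type} [Field F] (x : F) : F := ∑ l ∈ Finset.range h, x ^ (2 ^ l)

theorem ptr_add (h : ℕ) {F : Type} [Field F] [CharP F 2] (x y : F) :
    ptr h (x + y) = ptr h x + ptr h y := by
  unfold ptr
  rw [← Finset.sum_add_distrib]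
  exact Finset.sum_congr rfl fun l _ => add_pow_char_pow x y 2 l

theorem ptr_sq (h : ℕ) {F : Type} [Field F] [CharP F 2] (x : F) :
    ptr h x ^ 2 + x = ptr h x + x ^ (2 ^ h) := by
  unfold ptr
  rw [sum_pow_char 2]
  rw [← Finset.sum_range_succ (fun l => x ^ (2 ^ l)), Finset.sum_range_succ']
  simp [pow_succ, pow_mul]

theorem ptr_pow (h n : ℕ) {F : Type} [Field F] [CharP F 2] (x : F) :
    ptr h x ^ (2 ^ n) = ptr h (x ^ (2 ^ n)) := by
  unfold ptr
  rw [sum_pow_char_pow 2]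
  exact Finset.sum_congr rfl fun l _ => by rw [← pow_mul, ← pow_mul, mul_comm]

theorem fiber_card {G H : Type} [AddCommGroup G] [AddCommGroup H] [Fintype G] [DecidableEq G]
    [DecidableEq H] (φ : G →+ H) (y : H) (hy : ∃ x, φ x = y) :
    (Finset.univ.filter fun x => φ x = y).card = (Finset.univ.filter fun x => φ x = 0).card := by
  obtain ⟨x0, hx0⟩ := hy
  refine Finset.card_bij' (fun x _ => x - x0) (fun x _ => x + x0) ?_ ?_ ?_ ?_ <;>
    simp +contextual [hx0]

/-- cardinality of a preimage -/
theorem preimage_card {G H : Type} [AddCommGroup G] [AddCommGroup H] [Fintype G] [DecidableEq G]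
    [DecidableEq H] (φ : G →+ H) (Y : Finset H) (hY : ∀ y ∈ Y, ∃ x, φ x = y) :
    (Finset.univ.filter fun x => φ x ∈ Y).card
      = Y.card * (Finset.univ.filter fun x => φ x = 0).card := by
  rw [Finset.card_eq_sum_card_fiberwise (f := φ) (t := Y) (fun x hx => by simpa using hx)]
  rw [Finset.sum_const_nat]
  intro y hy
  rw [← fiber_card φ y (hY y hy)]
  congr 1
  ext x
  simp only [Finset.mem_filter, Finset.mem_univ, true_and]
  constructor
  · exact fun h => h.2
  · exact fun h => ⟨h ▸ hy, h⟩

theorem card_roots_le {F : Type} [Field F] [Fintype F] [DecidableEq F] (p : Polynomial F)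
    (hp : p ≠ 0) (s : Finset F) (hs : ∀ x ∈ s, p.eval x = 0) : s.card ≤ p.natDegree := by
  refine le_trans (Finset.card_le_card (t := p.roots.toFinset) ?_)
    (le_trans (Multiset.toFinset_card_le _) (Polynomial.card_roots' p))
  intro x hx
  simp [hp, hs x hx]

/-- The subfield of order `q`, as a finset. -/
def subK (q : ℕ) (F : Type) [Field F] [Fintype F] [DecidableEq F] : Finset F :=
  Finset.univ.filter fun x => x ^ q = x

/-- the trace hom -/
def trH (h : ℕ) (F : Type) [Field F] [CharP F 2] : F →+ F where
  toFun x := x + x ^ (2 ^ h)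
  map_zero' := by simp
  map_add' x y := by rw [add_pow_char_pow x y 2 h]; ring

/-- the partial trace hom -/
def ptrH (h : ℕ) (F : Type) [Field F] [CharP F 2] : F →+ F where
  toFun x := ptr h x
  map_zero' := by simp [ptr]
  map_add' x y := ptr_add h x y

set_option linter.unusedSectionVars false

section
variable {F : Type} [Field F] [Fintype F] [DecidableEq F] [CharP F 2]

theorem trH_mem (h : ℕ) (hF : Fintype.card F = (2 ^ h) ^ 2) (x : F) :
    trH h F x ∈ subK (2 ^ h) F := by
  simp only [subK, Finset.mem_filter, Finset.mem_univ, true_and, trH, AddMonoidHom.coe_mk,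
    ZeroHom.coe_mk]
  rw [add_pow_char_pow _ _ 2 h, ← pow_mul, ← pow_two, ← hF, FiniteField.pow_card, add_comm]

theorem trH_ker (h : ℕ) : (Finset.univ.filter fun x => trH h F x = 0) = subK (2 ^ h) F := by
  ext x
  simp only [subK, Finset.mem_filter, Finset.mem_univ, true_and]
  change x + x ^ (2 ^ h) = 0 ↔ _
  rw [CharTwo.add_eq_zero, eq_comm]

theorem card_subK_le (h : ℕ) (hh : 1 ≤ h) : (subK (2 ^ h) F).card ≤ 2 ^ h := by
  have h1 : 1 < 2 ^ h := Nat.one_lt_two_pow (by omega)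
  have := card_roots_le (X ^ (2 ^ h) - X : F[X]) (FiniteField.X_pow_card_sub_X_ne_zero F h1)
    (subK (2 ^ h) F) (fun x hx => by
      simp only [subK, Finset.mem_filter, Finset.mem_univ, true_and] at hx
      simp [hx])
  rwa [FiniteField.X_pow_card_sub_X_natDegree_eq F h1] at this

theorem trH_range (h : ℕ) (hh : 1 ≤ h) (hF : Fintype.card F = (2 ^ h) ^ 2) :
    (subK (2 ^ h) F).card = 2 ^ h ∧ ∀ y ∈ subK (2 ^ h) F, ∃ x, trH h F x = y := by
  set Y := Finset.univ.image (trH h F) with hY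
  have hc := preimage_card (trH h F) Y (fun y hy => by simpa [hY] using hy)
  have e : (Finset.univ.filter fun x => trH h F x ∈ Y) = Finset.univ := by
    ext x; simp [hY]
  rw [e, trH_ker, Finset.card_univ, hF] at hc
  have hsub : Y ⊆ subK (2 ^ h) F := by
    intro y hy
    obtain ⟨x, -, rfl⟩ := Finset.mem_image.1 hy
    exact trH_mem h hF x
  have h1 := Finset.card_le_card hsub
  have h2 := card_subK_le (F := F) h hh
  have h0 : 0 < 2 ^ h := by positivity
  have hk : (subK (2 ^ h) F).card = 2 ^ h := by nlinarith
  have hy : Y.card = 2 ^ h := by rw [hk] at hc; nlinarith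
  refine ⟨hk, fun y hy' => ?_⟩
  rw [← Finset.eq_of_subset_of_card_le hsub (by omega)] at hy'
  simpa [hY] using hy'

theorem ptr_zero_or_one (h : ℕ) (x : F) (hx : x ∈ subK (2 ^ h) F) :
    ptr h x = 0 ∨ ptr h x = 1 := by
  simp only [subK, Finset.mem_filter, Finset.mem_univ, true_and] at hx
  have := ptr_sq h x
  rw [hx] at this
  have h2 : ptr h x * (ptr h x - 1) = 0 := by linear_combination this
  rcases mul_eq_zero.1 h2 with h3 | h3
  · exact Or.inl h3
  · exact Or.inr (sub_eq_zero.1 h3)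

/-- The polynomial of the partial trace. -/
noncomputable def ptrP (h : ℕ) (F : Type) [Field F] : F[X] := ∑ l ∈ Finset.range h, X ^ (2 ^ l)

theorem ptrP_eval (h : ℕ) (x : F) : (ptrP h F).eval x = ptr h x := by
  simp [ptrP, ptr, Polynomial.eval_finsetSum]

theorem ptrP_natDegree (h : ℕ) : (ptrP h F).natDegree ≤ 2 ^ (h - 1) := by
  unfold ptrP
  refine Polynomial.natDegree_sum_le_of_forall_le _ _ fun l hl => ?_
  rw [Polynomial.natDegree_X_pow]
  exact Nat.pow_le_pow_right (by norm_num) (by have := Finset.mem_range.1 hl; omega)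

theorem ptrP_ne (h : ℕ) (hh : 1 ≤ h) : ptrP h F ≠ 0 := by
  intro h0
  have := congrArg (fun p => Polynomial.coeff p 1) h0
  simp only [ptrP, Polynomial.finsetSum_coeff, Polynomial.coeff_X_pow, Polynomial.coeff_zero] at this
  rw [Finset.sum_eq_single 0] at this
  · simp at this
  · intro b _ hb
    rw [if_neg]
    intro h1
    exact hb (by simpa using h1.symm)
  · simp; omega

theorem card_D (h : ℕ) (hh : 1 ≤ h) (hF : Fintype.card F = (2 ^ h) ^ 2) :
    ((subK (2 ^ h) F).filter fun x => ptr h x ≠ 0).card = 2 ^ (h - 1) := by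
  have hk := (trH_range (F := F) h hh hF).1
  have hp : 2 ^ h = 2 * 2 ^ (h - 1) := by
    rw [← pow_succ']; congr 1; omega
  have hsplit := Finset.card_filter_add_card_filter_not (s := subK (2 ^ h) F) (fun x => ptr h x = 0)
  have hle : ((subK (2 ^ h) F).filter fun x => ptr h x = 0).card ≤ 2 ^ (h - 1) :=
    (card_roots_le (ptrP h F) (ptrP_ne h hh) _ (fun x hx => by
      rw [ptrP_eval]; exact (Finset.mem_filter.1 hx).2)).trans (ptrP_natDegree h)
  have hle2 : ((subK (2 ^ h) F).filter fun x => ¬ ptr h x = 0).card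
      ≤ ((subK (2 ^ h) F).filter fun x => ptr h x = 0).card := by
    rcases Finset.eq_empty_or_nonempty ((subK (2 ^ h) F).filter fun x => ¬ ptr h x = 0) with h0 | ⟨z, hz⟩
    · rw [h0]; simp
    · refine Finset.card_le_card_of_injOn (fun x => x + z) ?_ (fun x _ y _ hxy => by simpa using hxy)
      intro x hx
      have hx' := Finset.mem_filter.1 (Finset.mem_coe.1 hx)
      have hz' := Finset.mem_filter.1 hz
      have e1 := (ptr_zero_or_one h x hx'.1).resolve_left hx'.2
      have e2 := (ptr_zero_or_one h z hz'.1).resolve_left hz'.2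
      have m1 := hx'.1
      have m2 := hz'.1
      simp only [subK, Finset.mem_filter, Finset.mem_univ, true_and] at m1 m2
      simp only [Finset.coe_filter, Set.mem_ofPred_eq, subK, Finset.mem_filter, Finset.mem_univ, true_and]
      refine ⟨by rw [add_pow_char_pow _ _ 2 h, m1, m2], ?_⟩
      rw [ptr_add, e1, e2, CharTwo.add_self_eq_zero]
  simp only [ne_eq]
  omega

/-- The function `L`. -/
def Lfun (h : ℕ) (S : Finset F) (x : F) : F := ptr h x * ∏ c ∈ S, (x + x ^ (2 ^ h) + c)

theorem Lfun_sum (h k : ℕ) (hh : 1 ≤ h) (hF : Fintype.card F = (2 ^ h) ^ 2)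
    (hk0 : 1 ≤ k) (hk2 : k ≤ 2 ^ h - 1) (S : Finset F) (hS : S.card = 2 ^ h - k - 1) (f g : F[X])
    (hf : f.natDegree ≤ k - 1) (hg : g.natDegree ≤ k - 1) :
    ∑ x : F, Lfun h S x * f.eval x * (g.eval x) ^ (2 ^ h) = 0 := by
  have hp : 2 ^ h = 2 * 2 ^ (h - 1) := by
    rw [← pow_succ']; congr 1; omega
  have h0 : 0 < 2 ^ (h - 1) := by positivity
  have key := sum_eval_zero (ptrP h F * (∏ c ∈ S, (X + X ^ (2 ^ h) + C c)) * f * g ^ (2 ^ h)) ?_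
  · rw [← key]
    refine Finset.sum_congr rfl fun x _ => ?_
    simp [ptrP_eval, Lfun, Polynomial.eval_prod]
  · have hprod : (∏ c ∈ S, (X + X ^ (2 ^ h) + C c : F[X])).natDegree ≤ S.card * 2 ^ h := by
      refine (Polynomial.natDegree_prod_le _ _).trans ?_
      rw [← smul_eq_mul]
      refine Finset.sum_le_card_nsmul _ _ _ fun c _ => ?_
      have h1 : 1 ≤ 2 ^ h := Nat.one_le_two_pow
      refine Polynomial.natDegree_add_le_of_degree_le (Polynomial.natDegree_add_le_of_degree_le ?_ ?_) ?_
      · simpa using h1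
      · simp
      · simp
    have hgq : (g ^ (2 ^ h)).natDegree ≤ 2 ^ h * (k - 1) :=
      Polynomial.natDegree_pow_le.trans (Nat.mul_le_mul_left _ hg)
    have hdeg : (ptrP h F * (∏ c ∈ S, (X + X ^ (2 ^ h) + C c)) * f * g ^ (2 ^ h)).natDegree
        ≤ 2 ^ (h - 1) + S.card * 2 ^ h + (k - 1) + 2 ^ h * (k - 1) :=
      Polynomial.natDegree_mul_le_of_le (Polynomial.natDegree_mul_le_of_le
        (Polynomial.natDegree_mul_le_of_le (ptrP_natDegree h) hprod) hf) hgq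
    refine lt_of_le_of_lt hdeg ?_
    rw [hF, hS]
    obtain ⟨k', rfl⟩ : ∃ k', k = k' + 1 := ⟨k - 1, by omega⟩
    obtain ⟨m, hm⟩ : ∃ m, 2 ^ h = m + k' + 2 := ⟨2 ^ h - k' - 2, by omega⟩
    generalize 2 ^ (h - 1) = u at *
    rw [hm] at hp ⊢
    have e1 : m + k' + 2 - (k' + 1) - 1 = m := by omega
    rw [e1]
    apply Nat.lt_sub_of_add_lt
    simp only [Nat.add_sub_cancel]
    nlinarith

theorem Lfun_tr (h : ℕ) (hF : Fintype.card F = (2 ^ h) ^ 2) (S : Finset F)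
    (hS : S ⊆ subK (2 ^ h) F) (x : F) :
    Lfun h S x + Lfun h S x ^ (2 ^ h) =
      ptr h (trH h F x) * ∏ c ∈ S, (trH h F x + c) := by
  have ht : trH h F x = x + x ^ (2 ^ h) := rfl
  have h1 : (∏ c ∈ S, (trH h F x + c)) ^ (2 ^ h) = ∏ c ∈ S, (trH h F x + c) := by
    rw [← Finset.prod_pow]
    refine Finset.prod_congr rfl fun c hc => ?_
    have m1 := hS hc
    have m2 := trH_mem h hF x
    simp only [subK, Finset.mem_filter, Finset.mem_univ, true_and] at m1 m2
    rw [add_pow_char_pow _ _ 2 h, m1, m2]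
  have h2 : Lfun h S x = ptr h x * ∏ c ∈ S, (trH h F x + c) := rfl
  rw [h2, mul_pow, h1, ptr_pow, ← add_mul, ← ptr_add, ht]

end

/-- If `q = 2^h` is even and `q/2 ≤ k ≤ q-1`, then the minimum Hamming
distance of the puncture code `P(C)` of the `[q²+1, k, q²+2-k]_{q²}` Reed-Solomon code `C`
is at most `q(k + 1 - q/2)`: `P(C)` contains a nonzero codeword of weight `q(k + 1 - q/2)`. -/
theorem puncture_RS_weight_upper_q_even
    (q k h : ℕ) (hh : 1 ≤ h) (hq : q = 2 ^ h) (hk1 : q ≤ 2 * k) (hk2 : k ≤ q - 1)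
    (F : Type) [Field F] [Fintype F] (hF : Fintype.card F = q ^ 2)
    (a : Fin (q ^ 2) → F) (ha : Function.Bijective a) :
    ∃ lam ∈ puncRS q k a, lam ≠ 0 ∧ wt lam = q * (k + 1 - q / 2) := by
  classical
  have hp : 2 ^ h = 2 * 2 ^ (h - 1) := by
    rw [← pow_succ']; congr 1; omega
  have h0 : 0 < 2 ^ (h - 1) := by positivity
  have : Fact (Nat.Prime 2) := ⟨Nat.prime_two⟩
  have : CharP F 2 := charP_of_card_eq_prime_pow (p := 2) (f := h * 2)
    (by rw [hF, hq, ← pow_mul])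
  have hF' : Fintype.card F = (2 ^ h) ^ 2 := by rw [hF, hq]
  have hqh : q / 2 = 2 ^ (h - 1) := by omega
  obtain ⟨hKc, hsurj⟩ := trH_range (F := F) h hh hF'
  have hD := card_D (F := F) h hh hF'
  set D := (subK (2 ^ h) F).filter fun x => ptr h x ≠ 0 with hDdef
  obtain ⟨S, hSD, hSc⟩ := Finset.exists_subset_card_eq (s := D) (n := 2 ^ h - k - 1) (by omega)
  have hSK : S ⊆ subK (2 ^ h) F := hSD.trans (Finset.filter_subset _ _)
  let Λ : F → F := fun x => Lfun h S x + Lfun h S x ^ (2 ^ h)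
  have hΛne : ∀ x, Λ x ≠ 0 ↔ trH h F x ∈ D \ S := by
    intro x
    have hm := trH_mem h hF' x
    simp only [Λ]
    rw [Lfun_tr h hF' S hSK, mul_ne_zero_iff, Finset.prod_ne_zero_iff, Finset.mem_sdiff, hDdef,
      Finset.mem_filter]
    constructor
    · rintro ⟨h1, h2⟩
      exact ⟨⟨hm, h1⟩, fun h3 => h2 _ h3 (CharTwo.add_self_eq_zero _)⟩
    · rintro ⟨⟨-, h1⟩, h2⟩
      exact ⟨h1, fun c hc h3 => h2 (by rw [CharTwo.add_eq_zero.1 h3]; exact hc)⟩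
  have hcard : (Finset.univ.filter fun x => Λ x ≠ 0).card = q * (k + 1 - q / 2) := by
    have h1 : (Finset.univ.filter fun x => trH h F x ∈ D \ S).card
        = (D \ S).card * (subK (2 ^ h) F).card := by
      rw [← trH_ker]
      convert preimage_card (trH h F) (D \ S) (fun y hy => hsurj y
        (Finset.filter_subset _ _ (Finset.mem_sdiff.1 hy).1))
    rw [hKc, Finset.card_sdiff_of_subset hSD, hD, hSc] at h1
    simp_rw [hΛne]
    rw [h1, hqh, hq, mul_comm]
    congr 1
    omega
  let lam : Fin (q ^ 2 + 1) → F := fun i => if hi : (i : ℕ) < q ^ 2 then Λ (a ⟨i, hi⟩) else 0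
  have hwt : wt lam = q * (k + 1 - q / 2) := by
    rw [← hcard]
    unfold wt
    have : {i | lam i ≠ 0} = ((Finset.univ.filter fun j : Fin (q ^ 2) => Λ (a j) ≠ 0).image
        Fin.castSucc : Finset (Fin (q ^ 2 + 1))) := by
      ext i
      simp only [Set.mem_ofPred_eq, Finset.coe_image, Finset.coe_filter, Finset.mem_univ, true_and,
        Set.mem_image, lam]
      constructor
      · intro hi
        by_cases hlt : (i : ℕ) < q ^ 2
        · rw [dif_pos hlt] at hi
          exact ⟨⟨i, hlt⟩, hi, rfl⟩
        · rw [dif_neg hlt] at hi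
          exact absurd rfl hi
      · rintro ⟨j, hj, rfl⟩
        simpa using hj
    rw [this, Set.ncard_coe_finset, Finset.card_image_of_injective _ (Fin.castSucc_injective _)]
    refine Finset.card_bij (fun j _ => a j) ?_ ?_ ?_
    · simp
    · exact fun _ _ _ _ h => ha.1 h
    · intro b hb
      obtain ⟨j, rfl⟩ := ha.2 b
      exact ⟨j, by simpa using hb, rfl⟩
  refine ⟨lam, ⟨?_, ?_⟩, ?_, hwt⟩
  · intro i
    simp only [lam]
    split_ifs
    · simp only [Λ]
      generalize Lfun h S _ = z
      rw [hq, add_pow_char_pow _ _ 2 h, ← pow_mul, ← pow_two, ← hF', FiniteField.pow_card, add_comm]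
    · exact zero_pow (by omega)
  · intro f g hf hg
    have hk0 : 1 ≤ k := by omega
    have deg : ∀ p : F[X], p.degree < (k : WithBot ℕ) → p.natDegree ≤ k - 1 := by
      intro p hpd
      by_cases hp0 : p = 0
      · simp [hp0]
      · have := (Polynomial.natDegree_lt_iff_degree_lt hp0).2 hpd
        omega
    rw [Fin.sum_univ_castSucc]
    simp only [lam, rsWord, Fin.val_castSucc, Fin.is_lt, dif_pos, Fin.eta, Fin.val_last,
      lt_irrefl, dif_neg, not_false_eq_true, zero_mul, add_zero]
    have := (Equiv.ofBijective a ha).sum_comp (fun x => Λ x * f.eval x * (g.eval x) ^ q)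
    simp only [Equiv.ofBijective_apply] at this
    rw [this]
    have hk2' : k ≤ 2 ^ h - 1 := by omega
    have s1 := Lfun_sum h k hh hF' hk0 hk2' S hSc f g (deg f hf) (deg g hg)
    have s2 := Lfun_sum h k hh hF' hk0 hk2' S hSc g f (deg g hg) (deg f hf)
    have s3 : ∑ x : F, Lfun h S x ^ (2 ^ h) * f.eval x * (g.eval x) ^ (2 ^ h) = 0 := by
      have := congrArg (fun z => z ^ (2 ^ h)) s2
      simp only [sum_pow_char_pow 2] at this
      rw [zero_pow (by omega)] at this
      rw [← this]
      refine Finset.sum_congr rfl fun x _ => ?_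
      rw [mul_pow, mul_pow, ← pow_mul (eval x f), ← pow_two, ← hF', FiniteField.pow_card]
      ring
    simp only [Λ, hq, add_mul, Finset.sum_add_distrib]
    rw [s1, s3, add_zero]
  · intro hl
    rw [hl] at hwt
    simp only [wt, Pi.zero_apply, ne_eq, not_true_eq_false, Set.ofPred_false, Set.ncard_empty] at hwt
    have : 0 < q * (k + 1 - q / 2) := Nat.mul_pos (by omega) (by omega)
    omega
end

section
/- If q is even and q/2 ≤ k ≤ q-1, then the minimum Hamming distance of the puncture code P(C) of the [q^2+1, k, q^2+2-k]_{q^2} Reed-Solomon code C is exactly q(k + 1 - q/2). -/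
open Polynomial

section RSHelpers
open Polynomial.Bivariate

theorem relprime_bezout {K : Type} [Field K] (f g : Polynomial (Polynomial K))
    (hf : f ≠ 0) (h : IsRelPrime f g) :
    ∃ (U V : Polynomial (Polynomial K)) (R : Polynomial K), R ≠ 0 ∧ U * f + V * g = C R := by
  classical
  let L := FractionRing (Polynomial K)
  have hinj : Function.Injective (algebraMap (Polynomial K) L) := IsFractionRing.injective _ _
  have := Classical.arbitrary (NormalizedGCDMonoid (Polynomial K))
  have hcop : IsCoprime (f.map (algebraMap (Polynomial K) L)) (g.map (algebraMap (Polynomial K) L)) := by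
    apply IsRelPrime.isCoprime
    intro d hdf hdg
    have hd0 : d ≠ 0 := by
      rintro rfl
      rw [zero_dvd_iff, Polynomial.map_eq_zero_iff hinj] at hdf
      exact hf hdf
    apply isUnit_or_eq_zero_of_isUnit_integerNormalization_primPart (R := Polynomial K) hd0
    set e := (IsLocalization.integerNormalization (nonZeroDivisors (Polynomial K)) d).primPart with he
    have hed : e.map (algebraMap (Polynomial K) L) ∣ d := by
      obtain ⟨c, c0, hc⟩ := IsLocalization.integerNormalization_spec (nonZeroDivisors (Polynomial K)) d
      have h1 : e.map (algebraMap (Polynomial K) L) ∣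
          (IsLocalization.integerNormalization (nonZeroDivisors (Polynomial K)) d).map
            (algebraMap (Polynomial K) L) :=
        Polynomial.map_dvd _ (Polynomial.primPart_dvd _)
      rw [hc, Algebra.smul_def, Polynomial.algebraMap_apply] at h1
      have hu : IsUnit (C (algebraMap (Polynomial K) L c)) := by
        rw [Polynomial.isUnit_C, isUnit_iff_ne_zero]
        intro h0
        rw [map_eq_zero_iff _ hinj] at h0
        exact nonZeroDivisors.ne_zero c0 h0
      exact (hu.dvd_mul_left).1 h1
    have hp : e.IsPrimitive := Polynomial.isPrimitive_primPart _
    exact h (hp.dvd_of_fraction_map_dvd_fraction_map (hed.trans hdf))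
      (hp.dvd_of_fraction_map_dvd_fraction_map (hed.trans hdg))
  obtain ⟨a, b, hab⟩ := hcop
  obtain ⟨c, c0, hc⟩ := IsLocalization.integerNormalization_spec (nonZeroDivisors (Polynomial K)) a
  obtain ⟨d, d0, hd⟩ := IsLocalization.integerNormalization_spec (nonZeroDivisors (Polynomial K)) b
  refine ⟨C d * IsLocalization.integerNormalization (nonZeroDivisors (Polynomial K)) a,
    C c * IsLocalization.integerNormalization (nonZeroDivisors (Polynomial K)) b, c * d,
    mul_ne_zero (nonZeroDivisors.ne_zero c0) (nonZeroDivisors.ne_zero d0), ?_⟩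
  apply Polynomial.map_injective _ hinj
  simp only [Polynomial.map_add, Polynomial.map_mul, hc, hd, Polynomial.map_C, map_mul]
  rw [Algebra.smul_def, Algebra.smul_def, Polynomial.algebraMap_apply, Polynomial.algebraMap_apply]
  linear_combination (C (algebraMap (Polynomial K) L c) * C (algebraMap (Polynomial K) L d)) * hab

section
variable {K : Type} [Field K]

theorem coeff_coeff_swap (f : Polynomial (Polynomial K)) (i j : ℕ) :
    ((Bivariate.swap f).coeff i).coeff j = (f.coeff j).coeff i := by
  induction f using Polynomial.induction_on' with
  | add p q hp hq => simp [hp, hq]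
  | monomial n p =>
    induction p using Polynomial.induction_on' with
    | add p q hp hq => simp [hp, hq]
    | monomial m r =>
      rw [Bivariate.swap_monomial_monomial]
      simp only [coeff_monomial]
      split_ifs <;> simp_all [coeff_monomial]

theorem evalEval_swap' (f : Polynomial (Polynomial K)) (x y : K) :
    (Bivariate.swap f).evalEval x y = f.evalEval y x := by
  rw [← coe_aevalAeval_eq_evalEval, ← coe_aevalAeval_eq_evalEval]
  exact Bivariate.aevalAeval_swap x y f

/-- degree in the inner variable -/
noncomputable def xdeg (f : Polynomial (Polynomial K)) : ℕ := (Bivariate.swap f).natDegree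

theorem xdeg_mul {f g : Polynomial (Polynomial K)} (hf : f ≠ 0) (hg : g ≠ 0) :
    xdeg (f * g) = xdeg f + xdeg g := by
  unfold xdeg
  rw [map_mul, natDegree_mul] <;> simpa

/-- polynomials of `X`-degree `< p` and `Y`-degree `< r` -/
def Bsub (K : Type) [Field K] (p r : ℕ) : Submodule K (Polynomial (Polynomial K)) where
  carrier := {h | ∀ i j, (p ≤ i ∨ r ≤ j) → (h.coeff j).coeff i = 0}
  add_mem' := by
    intro a b ha hb i j hij
    simp [ha i j hij, hb i j hij]
  zero_mem' := by simp
  smul_mem' := by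
    intro c a ha i j hij
    simp [ha i j hij]

theorem mem_Bsub_iff {p r : ℕ} {h : Polynomial (Polynomial K)} (h0 : h ≠ 0) :
    h ∈ Bsub K p r ↔ xdeg h < p ∧ h.natDegree < r := by
  have hs : Bivariate.swap h ≠ 0 := by simpa
  constructor
  · intro hh
    constructor
    · by_contra! hc
      apply leadingCoeff_ne_zero.2 hs
      ext j
      rw [leadingCoeff, coeff_coeff_swap]
      simpa [xdeg] using hh _ j (Or.inl hc)
    · by_contra! hc
      apply leadingCoeff_ne_zero.2 h0
      ext i
      rw [leadingCoeff]
      simpa using hh i _ (Or.inr hc)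
  · rintro ⟨h1, h2⟩ i j (hi | hj)
    · rw [← coeff_coeff_swap, coeff_eq_zero_of_natDegree_lt (lt_of_lt_of_le h1 hi)]; simp
    · rw [coeff_eq_zero_of_natDegree_lt (lt_of_lt_of_le h2 hj)]; simp

theorem mul_mem_Bsub {p r p' r' P R : ℕ} {g h : Polynomial (Polynomial K)}
    (hg : g ∈ Bsub K p r) (hh : h ∈ Bsub K p' r') (hP : p + p' ≤ P + 1) (hR : r + r' ≤ R + 1) :
    g * h ∈ Bsub K P R := by
  by_cases g0 : g = 0
  · subst g0; simp
  by_cases h0 : h = 0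
  · subst h0; simp
  rw [mem_Bsub_iff g0] at hg
  rw [mem_Bsub_iff h0] at hh
  rw [mem_Bsub_iff (mul_ne_zero g0 h0), xdeg_mul g0 h0, natDegree_mul g0 h0]
  omega

theorem self_mem_Bsub (g : Polynomial (Polynomial K)) : g ∈ Bsub K (xdeg g + 1) (g.natDegree + 1) := by
  by_cases g0 : g = 0
  · subst g0; simp
  rw [mem_Bsub_iff g0]; omega

theorem Bsub_mono {p r p' r' : ℕ} (h1 : p ≤ p') (h2 : r ≤ r') : Bsub K p r ≤ Bsub K p' r' := by
  intro h hh i j hij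
  apply hh; omega

/-- coordinates -/
noncomputable def BsubCoord (K : Type) [Field K] (p r : ℕ) : Bsub K p r →ₗ[K] (Fin p × Fin r → K) where
  toFun h := fun ij => (h.1.coeff ij.2).coeff ij.1
  map_add' := by intro a b; ext ij; simp
  map_smul' := by intro c a; ext ij; simp

theorem BsubCoord_bij (p r : ℕ) : Function.Bijective (BsubCoord K p r) := by
  constructor
  · rw [injective_iff_map_eq_zero]
    intro h hh
    ext j i
    by_cases hij : i < p ∧ j < r
    · have := congrFun hh (⟨i, hij.1⟩, ⟨j, hij.2⟩)
      simpa [BsubCoord] using this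
    · rw [h.2 i j (by omega)]; simp
  · intro c
    have hc : ∀ i j, ((∑ ij : Fin p × Fin r, monomial (ij.2 : ℕ) (monomial (ij.1 : ℕ) (c ij)) :
        Polynomial (Polynomial K)).coeff j).coeff i = ∑ ij : Fin p × Fin r,
          if (ij.2 : ℕ) = j ∧ (ij.1 : ℕ) = i then c ij else 0 := by
      intro i j
      simp only [finsetSum_coeff, coeff_monomial]
      apply Finset.sum_congr rfl
      intro ij _
      by_cases h1 : (ij.2 : ℕ) = j <;> by_cases h2 : (ij.1 : ℕ) = i <;> simp [h1, h2, coeff_monomial]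
    refine ⟨⟨∑ ij : Fin p × Fin r, monomial (ij.2 : ℕ) (monomial (ij.1 : ℕ) (c ij)), ?_⟩, ?_⟩
    · intro i j hij
      rw [hc]
      apply Finset.sum_eq_zero
      intro ij _
      rw [if_neg]
      have := ij.1.2
      have := ij.2.2
      omega
    · ext ij
      refine (hc ij.1 ij.2).trans ?_
      rw [ Finset.sum_eq_single ij]
      · simp
      · intro b _ hb
        rw [if_neg]
        rintro ⟨h1, h2⟩
        exact hb (Prod.ext (Fin.ext h2) (Fin.ext h1))
      · simp

noncomputable def BsubEquiv (K : Type) [Field K] (p r : ℕ) : Bsub K p r ≃ₗ[K] (Fin p × Fin r → K) :=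
  LinearEquiv.ofBijective _ (BsubCoord_bij p r)

instance BsubFinite (p r : ℕ) : Module.Finite K (Bsub K p r) :=
  Module.Finite.equiv (BsubEquiv K p r).symm

theorem finrank_Bsub (p r : ℕ) : Module.finrank K (Bsub K p r) = p * r := by
  rw [(BsubEquiv K p r).finrank_eq]; simp

end


section
variable {K : Type} [Field K]

theorem xdeg_map_C (u : Polynomial K) : xdeg (u.map C) = 0 := by
  unfold xdeg; rw [Bivariate.swap_map_C, natDegree_C]

theorem xdeg_C (u : Polynomial K) : xdeg (C u) = u.natDegree := by
  unfold xdeg; rw [Bivariate.swap_C, natDegree_map_eq_of_injective C_injective]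

/-- `μ` is orthogonal to all polynomials of bounded bidegree on the points `(x, σ x)` -/
def Orth (S : Finset K) (σ : K → K) (μ : K → K) (p r : ℕ) : Prop :=
  ∀ h ∈ Bsub K p r, ∑ x ∈ S, μ x * h.evalEval x (σ x) = 0

theorem univ_bezout (f g h : Polynomial K) (b d r : ℕ) (hf : f ≠ 0) (hb : f.natDegree = b)
    (hd : g.natDegree ≤ d) (hbd : b + d ≤ r) (hh : h.degree < (r : WithBot ℕ)) (hc : IsCoprime f g) :
    ∃ u v : Polynomial K, h = u * f + v * g ∧ (u ≠ 0 → u.natDegree + b < r) ∧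
      (v ≠ 0 → v.natDegree + d < r) := by
  obtain ⟨U, V, hUV⟩ := hc
  have hv : (h * V % f) ≠ 0 → (h * V % f).natDegree < b := by
    intro h0
    rw [← hb]
    exact natDegree_lt_natDegree h0 (EuclideanDomain.mod_lt _ hf)
  have hdiv : f ∣ h - (h * V % f) * g := by
    have e1 : h * V % f = h * V - f * (h * V / f) := by
      rw [eq_sub_iff_add_eq, add_comm]; exact EuclideanDomain.div_add_mod _ _
    rw [e1]
    refine ⟨h * U + (h * V / f) * g, ?_⟩
    linear_combination (-h) * hUV
  obtain ⟨u, hu⟩ := hdiv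
  refine ⟨u, h * V % f, ?_, ?_, ?_⟩
  · linear_combination hu
  · intro hu0
    have h1 : (f * u).degree < (r : WithBot ℕ) := by
      rw [← hu]
      refine lt_of_le_of_lt (degree_sub_le _ _) (max_lt hh ?_)
      by_cases hv0 : (h * V % f) = 0
      · rw [hv0, zero_mul, degree_zero]; exact WithBot.bot_lt_coe _
      · refine lt_of_le_of_lt degree_le_natDegree ?_
        have h2 : ((h * V % f) * g).natDegree ≤ _ := natDegree_mul_le
        have h3 := hv hv0
        exact_mod_cast (by omega : ((h * V % f) * g).natDegree < r)
    rw [degree_eq_natDegree (mul_ne_zero hf hu0), natDegree_mul hf hu0] at h1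
    have : f.natDegree + u.natDegree < r := by exact_mod_cast h1
    omega
  · intro h0
    have := hv h0
    omega

theorem ci_step (S : Finset K) (σ μ : K → K) (p r : ℕ) (f g : Polynomial (Polynomial K)) (x0 : K)
    (hx0 : x0 ∉ S) (hfS : ∀ x ∈ S, f.evalEval x (σ x) = 0) (hgS : ∀ x ∈ S, g.evalEval x (σ x) = 0)
    (hc : IsCoprime (f.map (evalRingHom x0)) (g.map (evalRingHom x0)))
    (hl : (f.leadingCoeff).eval x0 ≠ 0) (hfx : xdeg f ≤ p) (hgx : xdeg g ≤ p)
    (hr : f.natDegree + g.natDegree ≤ r) (ho : Orth S σ μ p r) :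
    Orth S σ (fun x => μ x / (x - x0)) (p + 1) r := by
  intro h hh
  have hb : (f.map (evalRingHom x0)).natDegree = f.natDegree :=
    natDegree_map_of_leadingCoeff_ne_zero _ hl
  have hf0 : f.map (evalRingHom x0) ≠ 0 := by
    intro h0
    have := congrArg (fun t => coeff t f.natDegree) h0
    simp only [coeff_map, coeff_zero] at this
    exact hl this
  have hh0 : (h.map (evalRingHom x0)).degree < (r : WithBot ℕ) := by
    by_cases h0 : h = 0
    · subst h0; simp
    · refine lt_of_le_of_lt degree_map_le ?_
      rw [degree_eq_natDegree h0]
      exact_mod_cast ((mem_Bsub_iff h0).1 hh).2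
  obtain ⟨u, v, huv, hu, hv⟩ := univ_bezout _ _ _ f.natDegree g.natDegree r hf0 hb
    natDegree_map_le hr hh0 hc
  have key : ∀ (w : Polynomial K) (e : Polynomial (Polynomial K)), xdeg e ≤ p →
      (w ≠ 0 → w.natDegree + e.natDegree < r) → w.map C * e ∈ Bsub K (p + 1) r := by
    intro w e he hw
    by_cases w0 : w = 0
    · subst w0; simp
    have := hw w0
    have h1 := self_mem_Bsub (w.map (C : K →+* Polynomial K))
    rw [xdeg_map_C, natDegree_map_eq_of_injective C_injective] at h1
    exact mul_mem_Bsub h1 (self_mem_Bsub e) (by omega) (by omega)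
  have h1mem : h - u.map C * f - v.map C * g ∈ Bsub K (p + 1) r :=
    Submodule.sub_mem _ (Submodule.sub_mem _ hh (key u f hfx hu)) (key v g hgx hv)
  have hdvd : C (X - C x0) ∣ h - u.map C * f - v.map C * g := by
    rw [C_dvd_iff_dvd_coeff]
    intro i
    rw [dvd_iff_isRoot, IsRoot.def]
    have hz : (h - u.map C * f - v.map C * g).map (evalRingHom x0) = 0 := by
      have hcc : ∀ w : Polynomial K, (w.map C).map (evalRingHom x0) = w := by
        intro w
        rw [Polynomial.map_map]
        have : (evalRingHom x0).comp C = RingHom.id K := by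
          apply RingHom.ext; intro a; simp
        rw [this, Polynomial.map_id]
      simp only [Polynomial.map_sub, Polynomial.map_mul, hcc]
      rw [huv]; ring
    have := congrArg (fun t => coeff t i) hz
    simpa only [coeff_map, coeff_zero, coe_evalRingHom] using this
  obtain ⟨h', hh'⟩ := hdvd
  have hmem' : h' ∈ Bsub K p r := by
    by_cases h0 : h' = 0
    · subst h0; simp
    have hX : (C (X - C x0) : Polynomial (Polynomial K)) ≠ 0 := by
      rw [Ne, C_eq_zero]; exact X_sub_C_ne_zero x0
    rw [hh', mem_Bsub_iff (mul_ne_zero hX h0), xdeg_mul hX h0, natDegree_mul hX h0, xdeg_C,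
      natDegree_X_sub_C, natDegree_C] at h1mem
    rw [mem_Bsub_iff h0]
    omega
  rw [← ho h' hmem']
  apply Finset.sum_congr rfl
  intro x hx
  have hne : x - x0 ≠ 0 := by
    intro h0
    rw [sub_eq_zero] at h0
    exact hx0 (h0 ▸ hx)
  have he := congrArg (fun t => evalEval x (σ x) t) hh'
  simp only [evalEval_sub, evalEval_mul, hfS x hx, hgS x hx, mul_zero, sub_zero, evalEval_C,
    eval_sub, eval_X, eval_C] at he
  rw [he]
  field_simp

theorem ci_iter (S : Finset K) (σ : K → K) (p r : ℕ) (f g : Polynomial (Polynomial K)) (x0 : K)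
    (hx0 : x0 ∉ S) (hfS : ∀ x ∈ S, f.evalEval x (σ x) = 0) (hgS : ∀ x ∈ S, g.evalEval x (σ x) = 0)
    (hc : IsCoprime (f.map (evalRingHom x0)) (g.map (evalRingHom x0)))
    (hl : (f.leadingCoeff).eval x0 ≠ 0) (hfx : xdeg f ≤ p) (hgx : xdeg g ≤ p)
    (hr : f.natDegree + g.natDegree ≤ r) (n : ℕ) (μ : K → K) (ho : Orth S σ μ p r) :
    ∃ ν : K → K, (∀ x ∈ S, ν x = 0 → μ x = 0) ∧ Orth S σ ν (p + n) r := by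
  induction n with
  | zero => exact ⟨μ, fun _ _ h => h, ho⟩
  | succ n ih =>
    obtain ⟨ν, h1, h2⟩ := ih
    refine ⟨_, ?_, ci_step S σ ν (p + n) r f g x0 hx0 hfS hgS hc hl (by omega) (by omega) hr h2⟩
    intro x hx h0
    apply h1 x hx
    rw [div_eq_zero_iff] at h0
    rcases h0 with h0 | h0
    · exact h0
    · rw [sub_eq_zero] at h0
      exact absurd (h0 ▸ hx) hx0

theorem ci_main [Infinite K] (S : Finset K) (σ μ : K → K) (p r : ℕ)
    (f g : Polynomial (Polynomial K)) (hf0 : f ≠ 0)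
    (hfS : ∀ x ∈ S, f.evalEval x (σ x) = 0) (hgS : ∀ x ∈ S, g.evalEval x (σ x) = 0)
    (hc : IsRelPrime f g) (hfx : xdeg f ≤ p) (hgx : xdeg g ≤ p)
    (hr : f.natDegree + g.natDegree ≤ r) (hr1 : 1 ≤ r) (ho : Orth S σ μ p r) :
    ∀ x ∈ S, μ x = 0 := by
  classical
  obtain ⟨U, V, R, hR, hUV⟩ := relprime_bezout f g hf0 hc
  obtain ⟨x0, hx0⟩ := Infinite.exists_notMem_finset (S ∪ (R * f.leadingCoeff).roots.toFinset)
  have hne : R * f.leadingCoeff ≠ 0 := mul_ne_zero hR (leadingCoeff_ne_zero.2 hf0)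
  simp only [Finset.mem_union, Multiset.mem_toFinset, mem_roots hne, not_or, IsRoot.def, eval_mul,
    mul_eq_zero] at hx0
  obtain ⟨hxS, hxR, hxl⟩ := hx0
  have hcop : IsCoprime (f.map (evalRingHom x0)) (g.map (evalRingHom x0)) := by
    have := congrArg (fun t => t.map (evalRingHom x0)) hUV
    simp only [Polynomial.map_add, Polynomial.map_mul, map_C, coe_evalRingHom] at this
    refine ⟨C (R.eval x0)⁻¹ * U.map (evalRingHom x0), C (R.eval x0)⁻¹ * V.map (evalRingHom x0), ?_⟩
    rw [mul_assoc, mul_assoc, ← mul_add, this, ← C_mul, inv_mul_cancel₀ hxR, C_1]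
  obtain ⟨ν, h1, h2⟩ := ci_iter S σ p r f g x0 hxS hfS hgS hcop hxl hfx hgx hr (S.card + 1) μ ho
  intro x hx
  apply h1 x hx
  have hmem : (C (∏ y ∈ S.erase x, (X - C y)) : Polynomial (Polynomial K)) ∈
      Bsub K (p + (S.card + 1)) r := by
    refine Bsub_mono ?_ ?_ (self_mem_Bsub _)
    · rw [xdeg_C, natDegree_prod_of_monic _ _ (fun y _ => monic_X_sub_C y)]
      simp
      have := Finset.card_erase_le (s := S) (a := x)
      omega
    · rw [natDegree_C]; omega
  have h3 := h2 _ hmem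
  rw [Finset.sum_eq_single x] at h3
  · rcases mul_eq_zero.1 h3 with h4 | h4
    · exact h4
    · rw [evalEval_C, eval_prod, Finset.prod_eq_zero_iff] at h4
      obtain ⟨y, hy, hy0⟩ := h4
      simp only [eval_sub, eval_X, eval_C, sub_eq_zero] at hy0
      simp [hy0] at hy
  · intro y hy hyx
    rw [evalEval_C, eval_prod, Finset.prod_eq_zero (Finset.mem_erase.2 ⟨hyx, hy⟩) (by simp), mul_zero]
  · intro h; exact absurd hx h

theorem gcd_lemma [Infinite K] (S : Finset K) (σ μ : K → K) (k : ℕ) (hμ : ∀ x ∈ S, μ x ≠ 0)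
    (f g : Polynomial (Polynomial K)) (hf0 : f ≠ 0) (hg0 : g ≠ 0)
    (hfS : ∀ x ∈ S, f.evalEval x (σ x) = 0) (hgS : ∀ x ∈ S, g.evalEval x (σ x) = 0)
    (hfx : xdeg f ≤ k) (hgx : xdeg g ≤ k)
    (hr : f.natDegree + g.natDegree ≤ k) (hr1 : f.natDegree < k) (ho : Orth S σ μ k k) :
    ∃ G : Polynomial (Polynomial K), G ∣ f ∧ G ∣ g ∧ ∀ x ∈ S, G.evalEval x (σ x) = 0 := by
  classical
  have := Classical.arbitrary (NormalizedGCDMonoid (Polynomial (Polynomial K)))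
  obtain ⟨f1, g1, hf, hg, hu⟩ := extract_gcd f g
  set G := gcd f g with hG
  have hG0 : G ≠ 0 := by intro h0; rw [h0, zero_mul] at hf; exact hf0 hf
  have hf10 : f1 ≠ 0 := by rintro rfl; rw [mul_zero] at hf; exact hf0 hf
  have hg10 : g1 ≠ 0 := by rintro rfl; rw [mul_zero] at hg; exact hg0 hg
  refine ⟨G, ⟨f1, hf⟩, ⟨g1, hg⟩, ?_⟩
  have hxf : xdeg f = xdeg G + xdeg f1 := by rw [hf]; exact xdeg_mul hG0 hf10
  have hxg : xdeg g = xdeg G + xdeg g1 := by rw [hg]; exact xdeg_mul hG0 hg10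
  have hyf : f.natDegree = G.natDegree + f1.natDegree := by rw [hf]; exact natDegree_mul hG0 hf10
  have hyg : g.natDegree = G.natDegree + g1.natDegree := by rw [hg]; exact natDegree_mul hG0 hg10
  set S' := S.filter (fun x => G.evalEval x (σ x) ≠ 0) with hS'
  have horth : Orth S' σ (fun x => μ x * G.evalEval x (σ x)) (k - xdeg G) (k - G.natDegree) := by
    intro h hh
    have h1 := ho (G * h) (mul_mem_Bsub (self_mem_Bsub G) hh (by omega) (by omega))
    rw [← h1, hS', Finset.sum_filter]
    apply Finset.sum_congr rfl
    intro x _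
    rw [evalEval_mul]
    split_ifs with h2
    · ring
    · rw [not_not] at h2; rw [h2]; ring
  have hz : ∀ (e e1 : Polynomial (Polynomial K)), e = G * e1 →
      (∀ x ∈ S, e.evalEval x (σ x) = 0) → ∀ x ∈ S', e1.evalEval x (σ x) = 0 := by
    intro e e1 he heS x hx
    rw [hS', Finset.mem_filter] at hx
    have := heS x hx.1
    rw [he, evalEval_mul, mul_eq_zero] at this
    exact this.resolve_left hx.2
  have hfin := ci_main S' σ _ (k - xdeg G) (k - G.natDegree) f1 g1 hf10 (hz f f1 hf hfS)
    (hz g g1 hg hgS) (gcd_isUnit_iff_isRelPrime.1 hu) (by omega) (by omega) (by omega) (by omega) horth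
  intro x hx
  by_contra hne
  have := hfin x (by rw [hS', Finset.mem_filter]; exact ⟨hx, hne⟩)
  rcases mul_eq_zero.1 this with h1 | h1
  · exact hμ x hx h1
  · exact hne h1

/-- evaluation on the points of `S` -/
noncomputable def evS (S : Finset K) (σ : K → K) : Polynomial (Polynomial K) →ₗ[K] (S → K) where
  toFun h := fun x => h.evalEval x.1 (σ x.1)
  map_add' := by intro a b; ext x; simp
  map_smul' := by intro c a; ext x; simp [evalEval_smul]

theorem evS_finrank (S : Finset K) (σ : K → K) (A N : Submodule K (Polynomial (Polynomial K)))
    [Module.Finite K A] [Module.Finite K N]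
    (hN : ∀ h ∈ A, (∀ x ∈ S, h.evalEval x (σ x) = 0) → h ∈ N) :
    Module.finrank K A ≤ Module.finrank K (A.map (evS S σ)) + Module.finrank K N := by
  have h1 := LinearMap.finrank_range_add_finrank_ker (K := K) (V := A) (V₂ := S → K) ((evS S σ).domRestrict A)
  rw [LinearMap.range_domRestrict] at h1
  have h2 : Module.finrank K (LinearMap.ker ((evS S σ).domRestrict A)) ≤ Module.finrank K N := by
    rw [← Submodule.finrank_map_subtype_eq]
    apply Submodule.finrank_mono
    rintro _ ⟨h, hh, rfl⟩
    apply hN _ h.2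
    intro x hx
    exact congrFun (LinearMap.mem_ker.1 hh) ⟨x, hx⟩
  omega

theorem orth_finrank {ι : Type} [Fintype ι] (μ : ι → K) (hμ : ∀ i, μ i ≠ 0)
    (A B : Submodule K (ι → K)) (hAB : ∀ a ∈ A, ∀ b ∈ B, ∑ i, μ i * (a i * b i) = 0) :
    Module.finrank K A + Module.finrank K B ≤ Fintype.card ι := by
  classical
  let T : (ι → K) →ₗ[K] Module.Dual K (ι → K) :=
    { toFun := fun b =>
        { toFun := fun a => ∑ i, μ i * (a i * b i)
          map_add' := by
            intro a a'
            rw [← Finset.sum_add_distrib]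
            apply Finset.sum_congr rfl; intro i _; simp only [Pi.add_apply]; ring
          map_smul' := by
            intro c a
            simp only [RingHom.id_apply, smul_eq_mul]
            rw [Finset.mul_sum]
            apply Finset.sum_congr rfl; intro i _; simp only [Pi.smul_apply, smul_eq_mul]; ring }
      map_add' := by
        intro b b'
        apply LinearMap.ext; intro a
        simp only [LinearMap.coe_mk, AddHom.coe_mk, LinearMap.add_apply]
        rw [← Finset.sum_add_distrib]
        apply Finset.sum_congr rfl; intro i _; simp only [Pi.add_apply]; ring
      map_smul' := by
        intro c b
        apply LinearMap.ext; intro a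
        simp only [LinearMap.coe_mk, AddHom.coe_mk, LinearMap.smul_apply, RingHom.id_apply, smul_eq_mul]
        rw [Finset.mul_sum]
        apply Finset.sum_congr rfl; intro i _; simp only [Pi.smul_apply, smul_eq_mul]; ring }
  have hT : Function.Injective T := by
    rw [injective_iff_map_eq_zero]
    intro b hb
    ext i
    have h1 : T b (Pi.single i 1) = 0 := by rw [hb]; rfl
    change ∑ j, μ j * ((Pi.single i 1 : ι → K) j * b j) = 0 at h1
    rw [Finset.sum_eq_single i] at h1
    · simpa [hμ i] using h1
    · intro j _ hj; simp [hj]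
    · simp
  have h1 := Subspace.finrank_add_finrank_dualAnnihilator_eq A
  have h2 : B.map T ≤ A.dualAnnihilator := by
    rintro _ ⟨b, hb, rfl⟩
    rw [Submodule.mem_dualAnnihilator]
    intro a ha
    exact hAB a ha b hb
  have h3 := Submodule.finrank_mono h2
  rw [← (Submodule.equivMapOfInjective T hT B).finrank_eq] at h3
  rw [Module.finrank_fintype_fun_eq_card] at h1
  omega

theorem ab_bound (S : Finset K) (σ μ : K → K) (hμ : ∀ x ∈ S, μ x ≠ 0)
    (A B NA NB : Submodule K (Polynomial (Polynomial K)))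
    [Module.Finite K A] [Module.Finite K NA] [Module.Finite K B] [Module.Finite K NB]
    (hNA : ∀ h ∈ A, (∀ x ∈ S, h.evalEval x (σ x) = 0) → h ∈ NA)
    (hNB : ∀ h ∈ B, (∀ x ∈ S, h.evalEval x (σ x) = 0) → h ∈ NB)
    (hAB : ∀ a ∈ A, ∀ b ∈ B, ∑ x ∈ S, μ x * (a * b).evalEval x (σ x) = 0) :
    Module.finrank K A + Module.finrank K B ≤ S.card + Module.finrank K NA + Module.finrank K NB := by
  have h1 := evS_finrank S σ A NA hNA
  have h2 := evS_finrank S σ B NB hNB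
  have h3 := orth_finrank (fun x : S => μ x.1) (fun x => hμ x.1 x.2) (A.map (evS S σ)) (B.map (evS S σ)) (by
    rintro _ ⟨a, ha, rfl⟩ _ ⟨b, hb, rfl⟩
    have := hAB a ha b hb
    rw [← Finset.sum_coe_sort] at this
    rw [← this]
    apply Finset.sum_congr rfl
    intro x _
    rw [evalEval_mul]; rfl)
  rw [Fintype.card_coe] at h3
  omega

theorem count_bound (S : Finset K) (q : ℕ) (D : Polynomial (Polynomial K)) (hD : D ≠ 0)
    (hx : xdeg D < q) (hS : ∀ x ∈ S, D.evalEval x (x ^ q) = 0) :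
    S.card ≤ xdeg D + q * D.natDegree := by
  classical
  set P : Polynomial K := D.eval (X ^ q) with hP
  have hsum : P = ∑ j ∈ Finset.range (D.natDegree + 1), D.coeff j * (X ^ q) ^ j := by
    rw [hP, eval_eq_sum_range]
  have hco : ∀ i j, xdeg D + 1 ≤ i → (D.coeff j).coeff i = 0 := fun i j hi =>
    self_mem_Bsub D i j (Or.inl hi)
  have hP0 : P ≠ 0 := by
    intro h0
    have h1 : P.coeff (D.leadingCoeff.natDegree + q * D.natDegree) = 0 := by rw [h0, coeff_zero]
    rw [hsum, finsetSum_coeff, Finset.sum_range_succ, Finset.sum_eq_zero, zero_add, ← pow_mul,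
      coeff_mul_X_pow] at h1
    · exact leadingCoeff_ne_zero.2 (leadingCoeff_ne_zero.2 hD) h1
    · intro j hj
      rw [Finset.mem_range] at hj
      rw [← pow_mul, coeff_mul_X_pow']
      split_ifs
      · apply hco
        have : q * (j + 1) ≤ q * D.natDegree := Nat.mul_le_mul_left _ hj
        rw [mul_add, mul_one] at this
        omega
      · rfl
  have hdeg : P.natDegree ≤ xdeg D + q * D.natDegree := by
    rw [hsum]
    apply natDegree_sum_le_of_forall_le
    intro j hj
    rw [Finset.mem_range] at hj
    refine natDegree_mul_le.trans ?_
    rw [← pow_mul, natDegree_X_pow]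
    have h1 : (D.coeff j).natDegree ≤ xdeg D := by
      rw [natDegree_le_iff_coeff_eq_zero]
      intro N hN
      exact hco N j hN
    have : q * j ≤ q * D.natDegree := Nat.mul_le_mul_left _ (by omega)
    omega
  refine le_trans ?_ hdeg
  refine le_trans ?_ (card_roots' P)
  apply Multiset.card_le_card
  rw [Multiset.le_iff_subset S.nodup]
  intro x hxS
  rw [mem_roots hP0, IsRoot.def, hP, ← hS x hxS, ← eval₂_evalRingHom]
  change (evalRingHom x) (eval₂ (RingHom.id _) (X ^ q) D) = _
  rw [hom_eval₂]
  simp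
end


section
variable {K : Type} [Field K]

theorem exists_conj (φ : K →+* K) (q : ℕ) (hφ : ∀ x, φ x = x ^ q) (S : Finset K)
    (hS : ∀ x ∈ S, (x ^ q) ^ q = x) (f : Polynomial (Polynomial K)) (hf : f ≠ 0)
    (hfS : ∀ x ∈ S, f.evalEval x (x ^ q) = 0) :
    ∃ g : Polynomial (Polynomial K), g ≠ 0 ∧ xdeg g = f.natDegree ∧ g.natDegree = xdeg f ∧
      ∀ x ∈ S, g.evalEval x (x ^ q) = 0 := by
  have hinj : Function.Injective (mapRingHom φ) := map_injective φ φ.injective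
  have hdeg : ∀ e : Polynomial (Polynomial K), (e.map (mapRingHom φ)).natDegree = e.natDegree :=
    fun e => natDegree_map_eq_of_injective hinj e
  refine ⟨Bivariate.swap (f.map (mapRingHom φ)), ?_, ?_, ?_, ?_⟩
  · simpa [Polynomial.map_eq_zero_iff hinj] using hf
  · unfold xdeg
    rw [Bivariate.swap_swap_apply, hdeg]
  · unfold xdeg
    rw [← hdeg (Bivariate.swap f)]
    congr 1
    ext i j
    simp [coeff_coeff_swap]
  · intro x hx
    rw [evalEval_swap']
    have h1 : evalEval (φ x) (φ (x ^ q)) (f.map (mapRingHom φ)) = φ (f.evalEval x (x ^ q)) :=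
      map_mapRingHom_evalEval φ _ x (x ^ q)
    rw [hfS x hx, map_zero, hφ, hφ, hS x hx] at h1
    exact h1

theorem main_arith (k t e a b s : ℕ) (hkt : k + 1 = t + e) (hte : t ≤ e) (ha : a < t) (hb : b < t)
    (hs : 0 < s)
    (h1 : a * b + (k + 1 - a) * (k + 1 - b) ≤ s + (k + 1 - 2 * a) * (k + 1 - 2 * b))
    (h2 : s ≤ a + 2 * e * b) (h3 : s ≤ b + 2 * e * a) : False := by
  obtain ⟨u, hu⟩ : ∃ u, k + 1 = u + 2 * a := ⟨k + 1 - 2 * a, by omega⟩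
  obtain ⟨v, hv⟩ : ∃ v, k + 1 = v + 2 * b := ⟨k + 1 - 2 * b, by omega⟩
  have e1 : k + 1 - a = u + a := by omega
  have e2 : k + 1 - b = v + b := by omega
  have e3 : k + 1 - 2 * a = u := by omega
  have e4 : k + 1 - 2 * b = v := by omega
  rw [e1, e2, e3, e4] at h1
  have e5 : (u + a) * (v + b) = u * v + u * b + a * v + a * b := by ring
  rw [e5] at h1
  have h1' : 2 * (a * b) + u * b + a * v ≤ s := by linarith
  have hab : 0 < a + b := by
    rcases Nat.eq_zero_or_pos (a + b) with h | h
    · have ha0 : a = 0 := by omega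
      have hb0 : b = 0 := by omega
      subst ha0; subst hb0
      simp at h2; omega
    · exact h
  have hu' : (u : ℤ) = t + e - 2 * a := by omega
  have hv' : (v : ℤ) = t + e - 2 * b := by omega
  have ha' : (a : ℤ) ≤ t - 1 := by omega
  have hb' : (b : ℤ) ≤ t - 1 := by omega
  have hab' : (0 : ℤ) < a + b := by exact_mod_cast hab
  have k1 : (2 * (a * b) + u * b + a * v : ℤ) ≤ s := by exact_mod_cast h1'
  have k2 : (s : ℤ) ≤ a + 2 * e * b := by exact_mod_cast h2
  have k3 : (s : ℤ) ≤ b + 2 * e * a := by exact_mod_cast h3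
  have f1 : (a : ℤ) * b ≤ (t - 1) * b := mul_le_mul_of_nonneg_right ha' (by positivity)
  have f2 : (a : ℤ) * b ≤ a * (t - 1) := mul_le_mul_of_nonneg_left hb' (by positivity)
  rw [hu', hv'] at k1
  clear h1 h2 h3 h1' e5
  linarith

theorem finrank_map_Bsub_le (D : Polynomial (Polynomial K)) (p r : ℕ) :
    Module.finrank K ((Bsub K p r).map (LinearMap.mulLeft K D)) ≤ p * r := by
  rw [← finrank_Bsub (K := K) p r]
  exact Submodule.finrank_map_le (LinearMap.mulLeft K D) (Bsub K p r)

set_option maxHeartbeats 1000000 in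
theorem main_K [Infinite K] (φ : K →+* K) (q e k t : ℕ) (hφ : ∀ x, φ x = x ^ q) (hq : q = 2 * e)
    (hkt : k + 1 = t + e) (ht : 1 ≤ t) (hte : t ≤ e) (S : Finset K)
    (hS : ∀ x ∈ S, (x ^ q) ^ q = x) (μ : K → K) (hμ : ∀ x ∈ S, μ x ≠ 0)
    (ho : Orth S (fun x => x ^ q) μ k k) (hne : S.Nonempty) : q * t ≤ S.card := by
  classical
  by_contra! hlt
  set σ : K → K := fun x => x ^ q with hσ
  -- Step 1
  have step1 : ∃ f : Polynomial (Polynomial K), f ≠ 0 ∧ xdeg f < t ∧ f.natDegree < e ∧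
      ∀ x ∈ S, f.evalEval x (x ^ q) = 0 := by
    by_contra! hcon
    have h1 := ab_bound S σ μ hμ (Bsub K t e) (Bsub K e t) ⊥ ⊥
      (by
        intro h hh hv
        rw [Submodule.mem_bot]
        by_contra h0
        rw [mem_Bsub_iff h0] at hh
        obtain ⟨x, hx, hx'⟩ := hcon h h0 hh.1 hh.2
        exact hx' (hv x hx))
      (by
        intro h hh hv
        rw [Submodule.mem_bot]
        by_contra h0
        rw [mem_Bsub_iff h0] at hh
        obtain ⟨g, g0, g1, g2, g3⟩ := exists_conj φ q hφ S hS h h0 hv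
        obtain ⟨x, hx, hx'⟩ := hcon g g0 (by omega) (by omega)
        exact hx' (g3 x hx))
      (by
        intro a ha b hb
        exact ho _ (mul_mem_Bsub ha hb (by omega) (by omega)))
    rw [finrank_Bsub, finrank_Bsub, finrank_bot] at h1
    have : q * t = t * e + e * t := by rw [hq]; ring
    omega
  -- Step 2
  have step2 : ∃ n : ℕ, ∃ D : Polynomial (Polynomial K), D ≠ 0 ∧ xdeg D < t ∧ D.natDegree < t ∧
      (∀ x ∈ S, D.evalEval x (x ^ q) = 0) ∧ xdeg D + D.natDegree = n := by
    obtain ⟨f, f0, f1, f2, f3⟩ := step1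
    obtain ⟨g, g0, g1, g2, g3⟩ := exists_conj φ q hφ S hS f f0 f3
    obtain ⟨G, ⟨f', hf'⟩, ⟨g', hg'⟩, hG⟩ := gcd_lemma S σ μ k hμ f g f0 g0 f3 g3 (by omega) (by omega) (by omega)
      (by omega) ho
    have hG0 : G ≠ 0 := by rintro rfl; rw [zero_mul] at hf'; exact f0 hf'
    have hf'0 : f' ≠ 0 := by rintro rfl; rw [mul_zero] at hf'; exact f0 hf'
    have hg'0 : g' ≠ 0 := by rintro rfl; rw [mul_zero] at hg'; exact g0 hg'
    have e1 : xdeg f = xdeg G + xdeg f' := by rw [hf', xdeg_mul hG0 hf'0]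
    have e2 : g.natDegree = G.natDegree + g'.natDegree := by rw [hg', natDegree_mul hG0 hg'0]
    exact ⟨_, G, hG0, by omega, by omega, hG, rfl⟩
  -- minimal D
  obtain ⟨D, D0, D1, D2, D3, D4⟩ := Nat.find_spec step2
  have hmin := fun m hm => Nat.find_min step2 (m := m) hm
  rw [← D4] at hmin
  clear D4
  have hmin' : ∀ E : Polynomial (Polynomial K), E ≠ 0 → xdeg E < t → E.natDegree < t →
      (∀ x ∈ S, E.evalEval x (x ^ q) = 0) → xdeg D + D.natDegree ≤ xdeg E + E.natDegree := by
    intro E h0 h1 h2 h3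
    by_contra! hc
    exact hmin _ hc ⟨E, h0, h1, h2, h3, rfl⟩
  have hmult : ∀ g ∈ Bsub K (k + 1 - xdeg D) (k + 1 - D.natDegree),
      (∀ x ∈ S, g.evalEval x (σ x) = 0) →
      g ∈ (Bsub K (k + 1 - 2 * xdeg D) (k + 1 - 2 * D.natDegree)).map (LinearMap.mulLeft K D) := by
    intro g hg hgS
    by_cases g0 : g = 0
    · subst g0; exact Submodule.zero_mem _
    have hg' := (mem_Bsub_iff g0).1 hg
    obtain ⟨G, ⟨d, hd⟩, hGg, hG⟩ := gcd_lemma S σ μ k hμ D g D0 g0 D3 hgS (by omega) (by omega) (by omega)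
      (by omega) ho
    have hG0 : G ≠ 0 := by rintro rfl; rw [zero_mul] at hd; exact D0 hd
    have hd0 : d ≠ 0 := by rintro rfl; rw [mul_zero] at hd; exact D0 hd
    have e1 : xdeg D = xdeg G + xdeg d := by rw [hd, xdeg_mul hG0 hd0]
    have e2 : D.natDegree = G.natDegree + d.natDegree := by rw [hd, natDegree_mul hG0 hd0]
    have e3 := hmin' G hG0 (by omega) (by omega) hG
    have hdm : d ∈ Bsub K 1 1 := by rw [mem_Bsub_iff hd0]; omega
    have hdu : IsUnit d := by
      have h1 : d = C (d.coeff 0) := eq_C_of_natDegree_eq_zero (by omega)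
      have h2 : d.coeff 0 = C ((d.coeff 0).coeff 0) := by
        ext i
        rcases Nat.eq_zero_or_pos i with rfl | hi
        · simp
        · rw [hdm i 0 (by omega), coeff_C, if_neg (by omega)]
      rw [h1, h2, isUnit_C, isUnit_C, isUnit_iff_ne_zero]
      intro h3
      rw [h3, C_0] at h2
      rw [h2, C_0] at h1
      exact hd0 h1
    have hDg : D ∣ g := by
      rw [hd]; exact (hdu.mul_right_dvd).2 hGg
    obtain ⟨g', hg''⟩ := hDg
    have hg'0 : g' ≠ 0 := by rintro rfl; rw [mul_zero] at hg''; exact g0 hg''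
    refine ⟨g', ?_, ?_⟩
    · rw [hg'', xdeg_mul D0 hg'0, natDegree_mul D0 hg'0] at hg'
      rw [SetLike.mem_coe, mem_Bsub_iff hg'0]
      omega
    · rw [hg'']; rfl
  have h1 := ab_bound S σ μ hμ (Bsub K (xdeg D) D.natDegree)
      (Bsub K (k + 1 - xdeg D) (k + 1 - D.natDegree)) ⊥ _
      (by
        intro h hh hv
        rw [Submodule.mem_bot]
        by_contra h0
        rw [mem_Bsub_iff h0] at hh
        have := hmin' h h0 (by omega) (by omega) hv
        omega)
      hmult
      (by
        intro a ha b hb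
        exact ho _ (mul_mem_Bsub ha hb (by omega) (by omega)))
  have h2 : Module.finrank K ((Bsub K (k + 1 - 2 * xdeg D) (k + 1 - 2 * D.natDegree)).map
      (LinearMap.mulLeft K D)) ≤ (k + 1 - 2 * xdeg D) * (k + 1 - 2 * D.natDegree) :=
    finrank_map_Bsub_le D _ _
  rw [finrank_Bsub, finrank_Bsub, finrank_bot] at h1
  have c1 := count_bound S q D D0 (by omega) D3
  obtain ⟨g, g0, g1, g2, g3⟩ := exists_conj φ q hφ S hS D D0 D3
  have c2 := count_bound S q g g0 (by omega) g3
  rw [g1, g2] at c2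
  rw [hq] at c1 c2
  exact main_arith k t e (xdeg D) D.natDegree S.card hkt hte D1 D2 hne.card_pos (by omega) c1 c2
end


theorem orth_of_monomial {K : Type} [Field K] (S : Finset K) (σ μ : K → K) (k : ℕ)
    (hm : ∀ i < k, ∀ j < k, ∑ x ∈ S, μ x * (x ^ i * σ x ^ j) = 0) : Orth S σ μ k k := by
  intro h hh
  by_cases h0 : h = 0
  · subst h0; simp
  have hd := (mem_Bsub_iff h0).1 hh
  have hx : ∀ x y : K, h.evalEval x y =
      ∑ j ∈ Finset.range k, ∑ i ∈ Finset.range k, (h.coeff j).coeff i * (x ^ i * y ^ j) := by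
    intro x y
    rw [evalEval, eval_eq_sum_range' hd.2, eval_finsetSum]
    refine Finset.sum_congr rfl fun j hj => ?_
    have hjd : (h.coeff j).natDegree < k := by
      have : (h.coeff j).natDegree ≤ k - 1 := by
        rw [natDegree_le_iff_coeff_eq_zero]
        intro N hN
        exact hh N j (Or.inl (by omega))
      omega
    rw [eval_mul, eval_eq_sum_range' hjd, Finset.sum_mul]
    refine Finset.sum_congr rfl fun i hi => ?_
    simp [mul_assoc]
  simp_rw [hx, Finset.mul_sum]
  rw [Finset.sum_comm]
  refine Finset.sum_eq_zero fun j hj => ?_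
  rw [Finset.sum_comm]
  refine Finset.sum_eq_zero fun i hi => ?_
  have := hm i (Finset.mem_range.1 hi) j (Finset.mem_range.1 hj)
  calc _ = (h.coeff j).coeff i * ∑ x ∈ S, μ x * (x ^ i * σ x ^ j) := by
        rw [Finset.mul_sum]
        refine Finset.sum_congr rfl fun x _ => ?_
        ring
    _ = 0 := by rw [this, mul_zero]

theorem char_two_of_card {F : Type} [Field F] [Fintype F] (q h : ℕ) (hq : q = 2 ^ h)
    (hF : Fintype.card F = q ^ 2) : CharP F 2 := by
  have h0 : ((2 : ℕ) : F) = 0 := by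
    have h1 := FiniteField.cast_card_eq_zero F
    rw [hF, hq] at h1
    push_cast at h1
    have h2 := eq_zero_of_pow_eq_zero (eq_zero_of_pow_eq_zero h1)
    exact_mod_cast h2
  exact CharTwo.of_one_ne_zero_of_two_eq_zero one_ne_zero (by exact_mod_cast h0)

theorem main_F {F : Type} [Field F] [Fintype F] (q k h : ℕ) (hh : 1 ≤ h) (hq : q = 2 ^ h)
    (hk1 : q ≤ 2 * k) (hk2 : k ≤ q - 1) (hF : Fintype.card F = q ^ 2)
    {ι : Type} [Fintype ι] [Nonempty ι] (z c : ι → F) (hz : Function.Injective z)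
    (hc : ∀ i, c i ≠ 0)
    (hm : ∀ i < k, ∀ j < k, ∑ x, c x * (z x ^ i * (z x ^ q) ^ j) = 0) :
    q * (k + 1 - q / 2) ≤ Fintype.card ι := by
  classical
  have hchar := char_two_of_card q h hq hF
  let K := AlgebraicClosure F
  have : CharP K 2 := charP_of_injective_algebraMap (algebraMap F K).injective 2
  have : Infinite K := IsAlgClosed.instInfinite
  let w : ι → K := fun i => algebraMap F K (z i)
  have hw : Function.Injective w := (algebraMap F K).injective.comp hz
  let μ : K → K := Function.extend w (fun i => algebraMap F K (c i)) 0
  have hμ : ∀ i, μ (w i) = algebraMap F K (c i) := fun i => hw.extend_apply _ _ i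
  have hq2 : 2 ≤ q := by rw [hq]; exact Nat.le_self_pow (by omega) 2
  have hqe : q = 2 * (q / 2) := by
    obtain ⟨m, rfl⟩ : ∃ m, h = m + 1 := ⟨h - 1, by omega⟩
    rw [hq, pow_succ]; omega
  have := main_K (K := K) (iterateFrobenius K 2 h) q (q / 2) k (k + 1 - q / 2)
    (by intro x; rw [iterateFrobenius_def, hq]) hqe (by omega) (by omega) (by omega)
    (Finset.univ.image w)
    (by
      intro x hx
      simp only [Finset.mem_image, Finset.mem_univ, true_and] at hx
      obtain ⟨i, rfl⟩ := hx
      rw [← pow_mul, ← pow_two, ← hF]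
      simp only [w]
      rw [← map_pow, FiniteField.pow_card])
    μ
    (by
      intro x hx
      simp only [Finset.mem_image, Finset.mem_univ, true_and] at hx
      obtain ⟨i, rfl⟩ := hx
      rw [hμ]
      simpa using hc i)
    (by
      apply orth_of_monomial
      intro i hi j hj
      rw [Finset.sum_image (fun x _ y _ h => hw h)]
      have := congrArg (algebraMap F K) (hm i hi j hj)
      rw [map_zero, map_sum] at this
      rw [← this]
      refine Finset.sum_congr rfl fun x _ => ?_
      rw [hμ]
      simp [w])
    (Finset.univ_nonempty.image w)
  rwa [Finset.card_image_of_injective _ hw, Finset.card_univ] at this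

theorem lower_bound
    (q k h : ℕ) (hh : 1 ≤ h) (hq : q = 2 ^ h) (hk1 : q ≤ 2 * k) (hk2 : k ≤ q - 1)
    (F : Type) [Field F] [Fintype F] (hF : Fintype.card F = q ^ 2)
    (a : Fin (q ^ 2) → F) (ha : Function.Bijective a) :
    ∀ lam ∈ puncRS q k a, lam ≠ 0 → q * (k + 1 - q / 2) ≤ wt lam := by
  classical
  intro lam hlam hne
  have hq2 : 2 ≤ q := by rw [hq]; exact Nat.le_self_pow (by omega) 2
  have hwt : wt lam = Fintype.card {i // lam i ≠ 0} := by
    rw [wt, ← Nat.card_coe_set_eq, Nat.card_eq_fintype_card]; rfl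
  have hNe : Nonempty {i // lam i ≠ 0} := by
    obtain ⟨i, hi⟩ := Function.ne_iff.1 hne
    exact ⟨i, hi⟩
  have hsum : ∀ G : Fin (q ^ 2 + 1) → F, (∀ i, lam i = 0 → G i = 0) →
      ∑ i : {i // lam i ≠ 0}, G i = ∑ i, G i := by
    intro G hG
    rw [← Finset.sum_subtype (Finset.univ.filter fun i => lam i ≠ 0) (by simp) G]
    apply Finset.sum_filter_of_ne
    intro i _ hi h0
    exact hi (hG i h0)
  rw [hwt]
  by_cases hlast : ∀ i : Fin (q ^ 2 + 1), ¬ (i : ℕ) < q ^ 2 → lam i = 0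
  · refine main_F q k h hh hq hk1 hk2 hF
      (fun i : {i // lam i ≠ 0} => if hi : (i.1 : ℕ) < q ^ 2 then a ⟨i.1, hi⟩ else 0)
      (fun i => lam i) ?_ (fun i => i.2) ?_
    · intro i j hij
      have h1 : (i.1 : ℕ) < q ^ 2 := by by_contra hc; exact i.2 (hlast _ hc)
      have h2 : (j.1 : ℕ) < q ^ 2 := by by_contra hc; exact j.2 (hlast _ hc)
      simp only [h1, h2, dif_pos] at hij
      have := ha.1 hij
      simp only [Fin.mk.injEq] at this
      exact Subtype.ext (Fin.ext this)
    · intro i hi j hj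
      have h1 := hlam.2 (X ^ i) (X ^ j) (by rw [degree_X_pow]; exact_mod_cast hi)
        (by rw [degree_X_pow]; exact_mod_cast hj)
      rw [← hsum _ (by intro i hi; simp [hi])] at h1
      refine Eq.trans (Finset.sum_congr rfl fun x _ => ?_) h1
      have hx : (x.1 : ℕ) < q ^ 2 := by by_contra hc; exact x.2 (hlast _ hc)
      simp only [rsWord, hx, dif_pos, eval_pow, eval_X]
      ring
  by_cases hall : ∃ i0 : Fin (q ^ 2 + 1), (i0 : ℕ) < q ^ 2 ∧ lam i0 = 0
  · obtain ⟨i0, hi0, hl0⟩ := hall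
    set c : F := a ⟨i0, hi0⟩ with hcdef
    have hac : ∀ (i : {i // lam i ≠ 0}) (hi : (i.1 : ℕ) < q ^ 2), a ⟨i.1, hi⟩ - c ≠ 0 := by
      intro i hi h0
      have := ha.1 (sub_eq_zero.1 h0)
      simp only [Fin.mk.injEq] at this
      exact i.2 (by rw [Fin.ext this]; exact hl0)
    refine main_F q k h hh hq hk1 hk2 hF
      (fun i : {i // lam i ≠ 0} => if hi : (i.1 : ℕ) < q ^ 2 then (a ⟨i.1, hi⟩ - c)⁻¹ else 0)
      (fun i => if hi : (i.1 : ℕ) < q ^ 2 then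
        lam i * ((a ⟨i.1, hi⟩ - c) ^ (k - 1) * ((a ⟨i.1, hi⟩ - c) ^ (k - 1)) ^ q) else lam i) ?_ ?_ ?_
    · intro i j hij
      by_cases h1 : (i.1 : ℕ) < q ^ 2 <;> by_cases h2 : (j.1 : ℕ) < q ^ 2
      · simp only [h1, h2, dif_pos, inv_inj, sub_left_inj] at hij
        have := ha.1 hij
        simp only [Fin.mk.injEq] at this
        exact Subtype.ext (Fin.ext this)
      · simp only [h1, h2, dif_pos, dif_neg, not_false_eq_true] at hij
        exact absurd (inv_eq_zero.1 hij) (hac i h1)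
      · simp only [h1, h2, dif_pos, dif_neg, not_false_eq_true] at hij
        exact absurd (inv_eq_zero.1 hij.symm) (hac j h2)
      · exact Subtype.ext (Fin.ext (by have := i.1.2; have := j.1.2; omega))
    · intro i
      by_cases h1 : (i.1 : ℕ) < q ^ 2
      · simp only [h1, dif_pos]
        have := hac i h1
        exact mul_ne_zero i.2 (mul_ne_zero (pow_ne_zero _ this) (pow_ne_zero _ (pow_ne_zero _ this)))
      · simp only [h1, dif_neg, not_false_eq_true]
        exact i.2
    · have hdeg : ∀ i < k, ((X - C c) ^ (k - 1 - i)).degree < (k : WithBot ℕ) := by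
        intro i hi
        rw [degree_pow, degree_X_sub_C, nsmul_one]
        exact_mod_cast (by omega : k - 1 - i < k)
      have hco : ∀ i < k, ((X - C c) ^ (k - 1 - i)).coeff (k - 1) = (0 : F) ^ i := by
        intro i hi
        rcases Nat.eq_zero_or_pos i with rfl | hp
        · have h1 := (monic_X_sub_C c).pow (k - 1)
          have h2 : ((X - C c) ^ (k - 1)).natDegree = k - 1 := by
            rw [natDegree_pow, natDegree_X_sub_C, mul_one]
          have h3 := h1.coeff_natDegree
          rw [h2] at h3
          simpa using h3
        · rw [zero_pow (by omega)]
          apply coeff_eq_zero_of_natDegree_lt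
          rw [natDegree_pow, natDegree_X_sub_C, mul_one]; omega
      have hinv : ∀ i < k, ∀ y : F, y ≠ 0 → y ^ (k - 1) * (y⁻¹) ^ i = y ^ (k - 1 - i) := by
        intro i hi y hy
        rw [inv_pow, pow_sub₀ y hy (by omega : i ≤ k - 1)]
      intro i hi j hj
      have h1 := hlam.2 ((X - C c) ^ (k - 1 - i)) ((X - C c) ^ (k - 1 - j)) (hdeg i hi) (hdeg j hj)
      rw [← hsum _ (by intro i hi; simp [hi])] at h1
      refine Eq.trans (Finset.sum_congr rfl fun x _ => ?_) h1
      by_cases hx : (x.1 : ℕ) < q ^ 2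
      · simp only [rsWord, hx, dif_pos, eval_pow, eval_sub, eval_X, eval_C]
        rw [← hinv i hi _ (hac x hx), ← hinv j hj _ (hac x hx)]
        ring
      · simp only [rsWord, hx, dif_neg, not_false_eq_true]
        rw [hco i hi, hco j hj]
        ring
  · push Not at hall hlast
    obtain ⟨j, hj1, hj2⟩ := hlast
    have hall' : ∀ i, lam i ≠ 0 := by
      intro i
      by_cases hi : (i : ℕ) < q ^ 2
      · exact hall i hi
      · have : i = j := Fin.ext (by have := i.2; have := j.2; omega)
        rw [this]; exact hj2
    have : Fintype.card {i // lam i ≠ 0} = q ^ 2 + 1 := by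
      rw [Fintype.card_subtype, Finset.filter_true_of_mem (fun i _ => hall' i)]; simp
    rw [this, pow_two]
    have : q * (k + 1 - q / 2) ≤ q * q := Nat.mul_le_mul_left _ (by omega)
    omega


section
variable {F : Type} [Field F]

/-- span of the functions `x^a (x^q)^b` with `a, b < m` -/
def Vsp (F : Type) [Field F] (q m : ℕ) : Submodule F (F → F) :=
  Submodule.span F {v | ∃ a < m, ∃ b < m, v = fun x => x ^ a * (x ^ q) ^ b}

theorem Vsp_step (q m : ℕ) (c : F) (v : F → F) (hv : v ∈ Vsp F q m) :
    (fun x => (x + x ^ q + c) * v x) ∈ Vsp F q (m + 1) := by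
  induction hv using Submodule.span_induction with
  | mem v hv =>
    obtain ⟨a, ha, b, hb, rfl⟩ := hv
    have h1 : (fun x : F => x ^ (a + 1) * (x ^ q) ^ b) ∈ Vsp F q (m + 1) :=
      Submodule.subset_span ⟨a + 1, by omega, b, by omega, rfl⟩
    have h2 : (fun x : F => x ^ a * (x ^ q) ^ (b + 1)) ∈ Vsp F q (m + 1) :=
      Submodule.subset_span ⟨a, by omega, b + 1, by omega, rfl⟩
    have h3 : (fun x : F => x ^ a * (x ^ q) ^ b) ∈ Vsp F q (m + 1) :=
      Submodule.subset_span ⟨a, by omega, b, by omega, rfl⟩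
    convert Submodule.add_mem _ (Submodule.add_mem _ h1 h2) (Submodule.smul_mem _ c h3) using 1
    funext x
    simp only [Pi.add_apply, Pi.smul_apply, smul_eq_mul]
    ring
  | zero =>
    convert (Vsp F q (m + 1)).zero_mem using 1
    funext x
    simp
  | add u v _ _ hu hv =>
    convert Submodule.add_mem _ hu hv using 1
    funext x
    simp only [Pi.add_apply]
    ring
  | smul r u _ hu =>
    convert Submodule.smul_mem _ r hu using 1
    funext x
    simp only [Pi.smul_apply, smul_eq_mul]
    ring

theorem Vsp_prod (q m : ℕ) (D : Finset F) (v : F → F) (hv : v ∈ Vsp F q m) :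
    (fun x => (∏ c ∈ D, (x + x ^ q + c)) * v x) ∈ Vsp F q (m + D.card) := by
  classical
  induction D using Finset.induction_on with
  | empty => simpa using hv
  | insert c D hc ih =>
    rw [Finset.card_insert_of_notMem hc, ← add_assoc]
    convert Vsp_step q _ c _ ih using 1
    funext x
    rw [Finset.prod_insert hc]
    ring

theorem Vsp_poly [CharP F 2] (q h k : ℕ) (hq : q = 2 ^ h) (f g : Polynomial F)
    (hf : f.degree < (k : WithBot ℕ)) (hg : g.degree < (k : WithBot ℕ)) :
    (fun x => f.eval x * (g.eval x) ^ q) ∈ Vsp F q k := by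
  have hk : f.natDegree < k ∨ f = 0 := by
    by_cases h0 : f = 0
    · exact Or.inr h0
    · exact Or.inl ((natDegree_lt_iff_degree_lt h0).2 hf)
  have hk' : g.natDegree < k ∨ g = 0 := by
    by_cases h0 : g = 0
    · exact Or.inr h0
    · exact Or.inl ((natDegree_lt_iff_degree_lt h0).2 hg)
  have hq0 : q ≠ 0 := by rw [hq]; positivity
  rcases hk with hk | rfl
  swap
  · convert (Vsp F q k).zero_mem using 1
    funext x
    simp
  rcases hk' with hk' | rfl
  swap
  · convert (Vsp F q k).zero_mem using 1
    funext x
    simp [hq0]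
  have key : (fun x => f.eval x * (g.eval x) ^ q) = ∑ i ∈ Finset.range k, ∑ j ∈ Finset.range k,
      (f.coeff i * g.coeff j ^ q) • (fun x : F => x ^ i * (x ^ q) ^ j) := by
    funext x
    have h1 : (g.eval x) ^ q = ∑ j ∈ Finset.range k, g.coeff j ^ q * (x ^ q) ^ j := by
      rw [eval_eq_sum_range' hk', hq, ← iterateFrobenius_def, map_sum]
      refine Finset.sum_congr rfl fun j _ => ?_
      rw [iterateFrobenius_def]
      ring
    rw [h1, eval_eq_sum_range' hk, Finset.sum_mul_sum]
    simp only [Finset.sum_apply, Pi.smul_apply, smul_eq_mul]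
    refine Finset.sum_congr rfl fun i _ => Finset.sum_congr rfl fun j _ => ?_
    ring
  rw [key]
  refine Submodule.sum_mem _ fun i hi => Submodule.sum_mem _ fun j hj => Submodule.smul_mem _ _ ?_
  exact Submodule.subset_span ⟨i, Finset.mem_range.1 hi, j, Finset.mem_range.1 hj, rfl⟩

/-- the trace polynomial -/
def trc (h : ℕ) (y : F) : F := ∑ s ∈ Finset.range h, y ^ (2 ^ s)

variable [Fintype F]

theorem trace_orth [CharP F 2] (q h : ℕ) (hq : q = 2 ^ h)
    (hF : Fintype.card F = q ^ 2) (v : F → F) (hv : v ∈ Vsp F q (q - 1)) :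
    ∑ x, trc h (x + x ^ q) * v x = 0 := by
  have hqq : ∀ x : F, (x ^ q) ^ q = x := by
    intro x; rw [← pow_mul, ← pow_two, ← hF, FiniteField.pow_card]
  have hbij : Function.Bijective (fun x : F => x ^ q) :=
    (Function.Involutive.bijective hqq)
  induction hv using Submodule.span_induction with
  | mem v hv =>
    obtain ⟨a, ha, b, hb, rfl⟩ := hv
    have hmono : ∀ s < h, ∀ a < q - 1, ∀ b < q - 1,
        ∑ x : F, x ^ (2 ^ s) * (x ^ a * (x ^ q) ^ b) = 0 := by
      intro s hs a ha b hb
      have hs2 : 2 * 2 ^ s ≤ q := by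
        rw [hq, ← pow_succ']; exact Nat.pow_le_pow_right (by norm_num) hs
      have hlt : 2 ^ s + a + q * b < Fintype.card F - 1 := by
        rw [hF]
        obtain ⟨p, rfl⟩ : ∃ p, q = p + 2 := ⟨q - 2, by omega⟩
        have hb' : (p + 2) * b ≤ (p + 2) * p := Nat.mul_le_mul_left _ (by omega)
        have e1 : (p + 2) ^ 2 = (p + 2) * p + 2 * p + 4 := by ring
        omega
      rw [← FiniteField.sum_pow_lt_card_sub_one F _ hlt]
      refine Finset.sum_congr rfl fun x _ => ?_
      rw [pow_add, pow_add, pow_mul, mul_assoc]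
    have hexp : ∀ x : F, trc h (x + x ^ q) * (x ^ a * (x ^ q) ^ b) =
        ∑ s ∈ Finset.range h, (x ^ (2 ^ s) * (x ^ a * (x ^ q) ^ b) +
          (x ^ q) ^ (2 ^ s) * (x ^ a * (x ^ q) ^ b)) := by
      intro x
      rw [trc, Finset.sum_mul]
      refine Finset.sum_congr rfl fun s _ => ?_
      rw [add_pow_char_pow, add_mul]
    simp_rw [hexp]
    rw [Finset.sum_comm]
    refine Finset.sum_eq_zero fun s hs => ?_
    rw [Finset.sum_add_distrib, hmono s (Finset.mem_range.1 hs) a ha b hb, zero_add,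
      ← hmono s (Finset.mem_range.1 hs) b hb a ha,
      ← hbij.sum_comp (fun x : F => x ^ (2 ^ s) * (x ^ b * (x ^ q) ^ a))]
    refine Finset.sum_congr rfl fun x _ => ?_
    simp only [hqq]
    ring
  | zero => simp
  | add u v _ _ hu hv => simp [mul_add, Finset.sum_add_distrib, hu, hv]
  | smul r u _ hu =>
    have : ∑ x, trc h (x + x ^ q) * (r • u) x = r * ∑ x, trc h (x + x ^ q) * u x := by
      rw [Finset.mul_sum]
      refine Finset.sum_congr rfl fun x _ => ?_
      simp only [Pi.smul_apply, smul_eq_mul]; ring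
    rw [this, hu, mul_zero]

theorem card_roots_le_s7 [DecidableEq F] (p : Polynomial F) (n : ℕ) (hp : p.Monic)
    (hn : p.natDegree = n) (T : Finset F) (hT : ∀ x ∈ T, p.eval x = 0) : T.card ≤ n := by
  rw [← hn]
  apply card_le_degree_of_subset_roots (p := p)
  intro x hx
  rw [mem_roots hp.ne_zero]
  exact hT x hx

theorem fib_tau [DecidableEq F] [CharP F 2] (q h : ℕ) (hh : 1 ≤ h) (hq : q = 2 ^ h)
    (hF : Fintype.card F = q ^ 2) :
    (Finset.univ.filter fun y : F => y ^ q = y).card = q ∧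
    ∀ y : F, y ^ q = y → (Finset.univ.filter fun x : F => x + x ^ q = y).card = q := by
  have hq2 : 2 ≤ q := by rw [hq]; exact Nat.le_self_pow (by omega) 2
  have hqq : ∀ x : F, (x ^ q) ^ q = x := by
    intro x; rw [← pow_mul, ← pow_two, ← hF, FiniteField.pow_card]
  have hmon : ∀ y : F, (X ^ q + (X + C y) : Polynomial F).Monic ∧
      (X ^ q + (X + C y) : Polynomial F).natDegree = q := by
    intro y
    have hd : (X + C y : Polynomial F).degree < (q : WithBot ℕ) := by
      rw [degree_X_add_C]; exact_mod_cast hq2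
    exact ⟨monic_X_pow_add hd, natDegree_eq_of_degree_eq_some (by
      rw [degree_add_eq_left_of_degree_lt] <;> simp only [degree_X_pow]; exact hd)⟩
  have hfib : ∀ y : F, (Finset.univ.filter fun x : F => x + x ^ q = y).card ≤ q := by
    intro y
    refine card_roots_le_s7 _ q (hmon y).1 (hmon y).2 _ fun x hx => ?_
    simp only [Finset.mem_filter, Finset.mem_univ, true_and] at hx
    simp only [eval_add, eval_pow, eval_X, eval_C]
    rw [← hx]
    linear_combination (x + x ^ q) * CharTwo.two_eq_zero (R := F)
  have hFq : (Finset.univ.filter fun y : F => y ^ q = y).card ≤ q := by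
    refine card_roots_le_s7 _ q (hmon 0).1 (hmon 0).2 _ fun x hx => ?_
    simp only [Finset.mem_filter, Finset.mem_univ, true_and] at hx
    simp only [eval_add, eval_pow, eval_X, eval_C]
    rw [hx]
    linear_combination x * CharTwo.two_eq_zero (R := F)
  have hcount : ∑ y ∈ Finset.univ.filter (fun y : F => y ^ q = y),
      (Finset.univ.filter fun x : F => x + x ^ q = y).card = q * q := by
    rw [← pow_two, ← hF, ← Finset.card_univ]
    symm
    apply Finset.card_eq_sum_card_fiberwise
    intro x _
    simp only [Finset.coe_filter, Finset.mem_univ, true_and, Set.mem_ofPred_eq]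
    have : (x + x ^ q) ^ q = x ^ q + (x ^ q) ^ q := by
      conv_lhs => rw [hq]
      rw [add_pow_char_pow, ← hq]
    rw [this, hqq, add_comm]
  have hle := Finset.sum_le_card_nsmul (Finset.univ.filter (fun y : F => y ^ q = y))
    (fun y => (Finset.univ.filter fun x : F => x + x ^ q = y).card) q (fun y _ => hfib y)
  rw [hcount, smul_eq_mul] at hle
  have hFq' : (Finset.univ.filter fun y : F => y ^ q = y).card = q :=
    le_antisymm hFq (Nat.le_of_mul_le_mul_right hle (by omega))
  refine ⟨hFq', ?_⟩
  have heq := (Finset.sum_eq_sum_iff_of_le (s := Finset.univ.filter (fun y : F => y ^ q = y))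
    (f := fun y => (Finset.univ.filter fun x : F => x + x ^ q = y).card) (g := fun _ => q)
    (fun y _ => hfib y)).1 (by rw [hcount, Finset.sum_const, hFq', smul_eq_mul])
  intro y hy
  exact heq y (by simpa using hy)

theorem trc_01 [CharP F 2] (q h : ℕ) (hq : q = 2 ^ h) (y : F) (hy : y ^ q = y) :
    trc h y = 0 ∨ trc h y = 1 := by
  have h1 : (trc h y) ^ 2 = trc h y := by
    have h2 : (trc h y) ^ 2 = ∑ s ∈ Finset.range h, y ^ (2 ^ (s + 1)) := by
      rw [trc, sum_pow_char]
      refine Finset.sum_congr rfl fun s _ => ?_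
      rw [← pow_mul, pow_succ]
    have h3 := Finset.sum_range_succ (fun s => y ^ (2 ^ s)) h
    rw [Finset.sum_range_succ' (fun s => y ^ (2 ^ s)) h, ← h2, ← hq, hy] at h3
    simp only [pow_zero, pow_one] at h3
    exact add_right_cancel h3
  have h2 : trc h y * (trc h y - 1) = 0 := by linear_combination h1
  rcases mul_eq_zero.1 h2 with h | h
  · exact Or.inl h
  · exact Or.inr (sub_eq_zero.1 h)

theorem card_trc [DecidableEq F] [CharP F 2] (q h : ℕ) (hh : 1 ≤ h) (hq : q = 2 ^ h)
    (hF : Fintype.card F = q ^ 2) :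
    (Finset.univ.filter fun y : F => y ^ q = y ∧ trc h y = 1).card = q / 2 := by
  obtain ⟨m, rfl⟩ : ∃ m, h = m + 1 := ⟨h - 1, by omega⟩
  have hq2 : q / 2 = 2 ^ m := by rw [hq, pow_succ]; omega
  have hq2' : q = 2 * 2 ^ m := by rw [hq, pow_succ]; omega
  have hb : ∀ c : F, (Finset.univ.filter fun y : F => y ^ q = y ∧ trc (m + 1) y = c).card ≤ q / 2 := by
    intro c
    have hd : ((∑ s ∈ Finset.range m, X ^ (2 ^ s)) - C c : Polynomial F).degree
        < ((2 ^ m : ℕ) : WithBot ℕ) := by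
      refine lt_of_le_of_lt (degree_sub_le _ _) (max_lt ?_ ?_)
      · refine lt_of_le_of_lt (degree_sum_le _ _) ?_
        rw [Finset.sup_lt_iff (by exact WithBot.bot_lt_coe _)]
        intro s hs
        rw [degree_X_pow]
        exact_mod_cast Nat.pow_lt_pow_right (by norm_num) (Finset.mem_range.1 hs)
      · refine lt_of_le_of_lt degree_C_le ?_
        exact_mod_cast (by positivity : 0 < 2 ^ m)
    refine card_roots_le_s7 (X ^ (2 ^ m) + ((∑ s ∈ Finset.range m, X ^ (2 ^ s)) - C c)) _
      (monic_X_pow_add hd) (natDegree_eq_of_degree_eq_some (by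
        rw [degree_add_eq_left_of_degree_lt] <;> simp only [degree_X_pow]
        · rw [hq2]
        · exact hd)) _ fun x hx => ?_
    simp only [Finset.mem_filter, Finset.mem_univ, true_and] at hx
    have h2 := hx.2
    rw [trc, Finset.sum_range_succ] at h2
    simp only [eval_add, eval_sub, eval_pow, eval_X, eval_C, eval_finsetSum]
    rw [← h2]; ring
  have h0 := hb 0
  have h1 := hb 1
  have hall : (Finset.univ.filter fun y : F => y ^ q = y) ⊆
      (Finset.univ.filter fun y : F => y ^ q = y ∧ trc (m + 1) y = 0) ∪
      (Finset.univ.filter fun y : F => y ^ q = y ∧ trc (m + 1) y = 1) := by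
    intro y hy
    simp only [Finset.mem_filter, Finset.mem_univ, true_and, Finset.mem_union] at hy ⊢
    rcases trc_01 q (m + 1) hq y hy with h | h
    · exact Or.inl ⟨hy, h⟩
    · exact Or.inr ⟨hy, h⟩
  have h2 := (Finset.card_le_card hall).trans (Finset.card_union_le _ _)
  rw [(fib_tau q (m + 1) hh hq hF).1] at h2
  omega

theorem upper_bound
    (q k h : ℕ) (hh : 1 ≤ h) (hq : q = 2 ^ h) (hk1 : q ≤ 2 * k) (hk2 : k ≤ q - 1)
    (hF : Fintype.card F = q ^ 2)
    (a : Fin (q ^ 2) → F) (ha : Function.Bijective a) :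
    ∃ lam ∈ puncRS q k a, lam ≠ 0 ∧ wt lam = q * (k + 1 - q / 2) := by
  classical
  have hchar := char_two_of_card q h hq hF
  have hq2 : 2 ≤ q := by rw [hq]; exact Nat.le_self_pow (by omega) 2
  have hqe : q = 2 * (q / 2) := by
    obtain ⟨m, rfl⟩ : ∃ m, h = m + 1 := ⟨h - 1, by omega⟩
    rw [hq, pow_succ]; omega
  have hqq : ∀ x : F, (x ^ q) ^ q = x := by
    intro x; rw [← pow_mul, ← pow_two, ← hF, FiniteField.pow_card]
  have hadd : ∀ x y : F, (x + y) ^ q = x ^ q + y ^ q := by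
    intro x y; rw [hq]; exact add_pow_char_pow x y 2 h
  have hτ : ∀ x : F, (x + x ^ q) ^ q = x + x ^ q := by
    intro x; rw [hadd, hqq, add_comm]
  set A := Finset.univ.filter fun y : F => y ^ q = y ∧ trc h y = 1 with hA
  have hAc : A.card = q / 2 := card_trc q h hh hq hF
  obtain ⟨D, hDA, hDc⟩ := Finset.exists_subset_card_eq (s := A) (n := q - 1 - k) (by omega)
  let L : F → F := fun x => trc h (x + x ^ q) * ∏ c ∈ D, (x + x ^ q + c)
  have hLq : ∀ x, L x ^ q = L x := by
    intro x
    simp only [L]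
    rw [mul_pow, ← Finset.prod_pow]
    congr 1
    · rcases trc_01 q h hq _ (hτ x) with h | h <;> rw [h]
      · rw [zero_pow (by omega)]
      · rw [one_pow]
    · refine Finset.prod_congr rfl fun c hc => ?_
      have := hDA hc
      simp only [hA, Finset.mem_filter, Finset.mem_univ, true_and] at this
      rw [hadd, hτ, this.1]
  have hL0 : ∀ x, L x ≠ 0 ↔ x + x ^ q ∈ A \ D := by
    intro x
    simp only [L, mul_ne_zero_iff, Finset.prod_ne_zero_iff, Finset.mem_sdiff, hA,
      Finset.mem_filter, Finset.mem_univ, true_and]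
    refine and_congr ?_ ?_
    · rcases trc_01 q h hq _ (hτ x) with h | h <;> simp [h, hτ]
    · constructor
      · intro h1 h2
        exact h1 _ h2 (CharTwo.add_self_eq_zero _)
      · intro h1 c hc h2
        exact h1 (by rw [CharTwo.add_eq_zero.1 h2]; exact hc)
  have hLc : (Finset.univ.filter fun x => L x ≠ 0).card = q * (k + 1 - q / 2) := by
    rw [Finset.card_eq_sum_card_fiberwise (f := fun x => x + x ^ q) (t := A \ D)]
    · have : ∀ y ∈ A \ D, (((Finset.univ.filter fun x => L x ≠ 0)).filter
          fun x => x + x ^ q = y).card = q := by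
        intro y hy
        have hy' : y ^ q = y := by
          have := (Finset.mem_sdiff.1 hy).1
          simp only [hA, Finset.mem_filter, Finset.mem_univ, true_and] at this
          exact this.1
        refine Eq.trans (congrArg Finset.card ?_) ((fib_tau q h hh hq hF).2 y hy')
        ext x
        simp only [Finset.mem_filter, Finset.mem_univ, true_and, hL0]
        constructor
        · exact fun h => h.2
        · intro h; exact ⟨by rw [h]; exact hy, h⟩
      rw [Finset.sum_congr rfl this, Finset.sum_const, Finset.card_sdiff_of_subset hDA, smul_eq_mul,
        mul_comm, hAc, hDc]
      congr 1
      omega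
    · intro x hx
      simp only [Finset.coe_filter, Finset.mem_univ, true_and, Set.mem_ofPred_eq] at hx
      exact_mod_cast (hL0 x).1 hx
  let lam : Fin (q ^ 2 + 1) → F := fun i => if hi : (i : ℕ) < q ^ 2 then L (a ⟨i, hi⟩) else 0
  have hwt : wt lam = q * (k + 1 - q / 2) := by
    rw [← hLc, wt, ← Set.ncard_coe_finset]
    let e := Equiv.ofBijective a ha
    have hinj : Function.Injective (fun x : F => (e.symm x).castSucc) :=
      (Fin.castSucc_injective _).comp e.symm.injective
    rw [← Set.ncard_image_of_injective _ hinj]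
    congr 1
    ext i
    simp only [Set.mem_ofPred_eq, Set.mem_image, Finset.coe_filter, Finset.mem_univ, true_and]
    constructor
    · intro hi
      by_cases h1 : (i : ℕ) < q ^ 2
      · refine ⟨a ⟨i, h1⟩, ?_, ?_⟩
        · simpa [lam, h1] using hi
        · have : e.symm (a ⟨i, h1⟩) = ⟨i, h1⟩ := e.symm_apply_apply _
          rw [this]; rfl
      · simp [lam, h1] at hi
    · rintro ⟨x, hx, rfl⟩
      have h1 : a (e.symm x) = x := e.apply_symm_apply x
      simpa [lam, h1] using hx
  refine ⟨lam, ⟨?_, ?_⟩, ?_, hwt⟩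
  · intro i
    by_cases h1 : (i : ℕ) < q ^ 2
    · simp only [lam, h1, dif_pos, hLq]
    · simp only [lam, h1, dif_neg, not_false_eq_true]
      exact zero_pow (by omega)
  · intro f g hf hg
    rw [Fin.sum_univ_castSucc]
    have hlast : lam (Fin.last (q ^ 2)) = 0 := by simp [lam]
    rw [hlast, zero_mul, zero_mul, add_zero]
    have h1 := Vsp_prod q k D _ (Vsp_poly q h k hq f g hf hg)
    rw [hDc, show k + (q - 1 - k) = q - 1 by omega] at h1
    have h2 := trace_orth q h hq hF _ h1
    rw [← ha.sum_comp] at h2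
    refine Eq.trans (Finset.sum_congr rfl fun i _ => ?_) h2
    simp only [lam, rsWord, Fin.val_castSucc, Fin.is_lt, dif_pos, Fin.eta, L]
    ring
  · intro h0
    have : wt lam = 0 := by simp [wt, h0]
    rw [hwt] at this
    have : 0 < q * (k + 1 - q / 2) := Nat.mul_pos (by omega) (by omega)
    omega
end

end RSHelpers

/-- If `q = 2^h` is even and `q/2 ≤ k ≤ q-1`, then the minimum Hamming
distance of the puncture code `P(C)` of the `[q²+1, k, q²+2-k]_{q²}` Reed-Solomon code `C`
is exactly `q(k + 1 - q/2)`. -/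
theorem min_distance_puncture_RS_q_even
    (q k h : ℕ) (hh : 1 ≤ h) (hq : q = 2 ^ h) (hk1 : q ≤ 2 * k) (hk2 : k ≤ q - 1)
    (F : Type) [Field F] [Fintype F] (hF : Fintype.card F = q ^ 2)
    (a : Fin (q ^ 2) → F) (ha : Function.Bijective a) :
    (∃ lam ∈ puncRS q k a, lam ≠ 0 ∧ wt lam = q * (k + 1 - q / 2)) ∧
    (∀ lam ∈ puncRS q k a, lam ≠ 0 → q * (k + 1 - q / 2) ≤ wt lam) := by
  exact ⟨upper_bound q k h hh hq hk1 hk2 hF a ha, lower_bound q k h hh hq hk1 hk2 F hF a ha⟩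
end
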